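/- Given an (algebraically modeled) CLWX 2-algebroid (R, E0, E1, ∂, ρ, ∘, Ω, S, D) over a field k of characteristic 0, form the 3-term chain complex L with L0 = E0, L1 = E1, L2 = R, with d = ∂: L1 → L0 and d = D: L2 → L1 (a complex by (C6)), and define multilinear structure maps on L: λ2 equal to ∘ on the components Ei ⊗ Ej with i + j ≤ 1, λ2(x,f) = S(x, Df) = ρ(x)(f) for x ∈ E0 and f ∈ R, and zero on all other components; λ21 equal to S on the components E0 ⊗ E1 and E1 ⊗ E0 and zero otherwise; λ3 equal to Ω on E0 ⊗ E0 ⊗ E0 and zero otherwise; and λ211 = λ31 = λ32 = λ4 = 0. Then (L, d, λ) is a weak Lie 3-algebra over k. -/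

import Mathlib

namespace WL3

open Finset

/-! ## Graded multilinear maps -/

/-- Cast along an equality of degrees. -/
def gcast {M : ℤ → Type} {i j : ℤ} (h : i = j) (x : M i) : M j := h ▸ x

/-- A degree-`r`, arity-`m` map between ℤ-graded types, given by its components on
homogeneous tuples: its component at degrees `d` maps `L (d 1) ⊗ ⋯ ⊗ L (d m)` to
`M (r + d 1 + ⋯ + d m)`. -/
abbrev MMap (L M : ℤ → Type) (m : ℕ) (r : ℤ) : Type :=
  ∀ d : Fin m → ℤ, (∀ j, L (d j)) → M (r + ∑ j, d j)

variable {L M N : ℤ → Type}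

/-- Cast an `MMap` along equalities of arities and degrees. -/
def mcast {m m' : ℕ} {r r' : ℤ} (hm : m = m') (hr : r = r') (μ : MMap L M m r) :
    MMap L M m' r' := by subst hm; subst hr; exact μ

/-- Koszul sign of the permutation `σ` acting on a tuple of homogeneous elements of
degrees `d`: `∏_{i<j, σ i > σ j} (-1)^(d i · d j)`. -/
def koszulSign {m : ℕ} (d : Fin m → ℤ) (σ : Equiv.Perm (Fin m)) : ℤ :=
  ∏ p ∈ Finset.univ.filter (fun p : Fin m × Fin m => p.1 < p.2 ∧ σ p.2 < σ p.1),
    (-1 : ℤ) ^ (d p.1 * d p.2).natAbs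

/-- The action `μ ↦ μ^σ`, `μ^σ(x₁,…,x_m) = ε(σ;x)·μ(x_{σ⁻¹1},…,x_{σ⁻¹m})`. -/
def pa [∀ i, AddCommGroup (M i)] {m : ℕ} {r : ℤ} (σ : Equiv.Perm (Fin m)) (μ : MMap L M m r) :
    MMap L M m r := fun d x =>
  koszulSign d σ •
    gcast (by rw [Equiv.sum_comp σ.symm d])
      (μ (fun j => d (σ.symm j)) (fun j => x (σ.symm j)))

/-- Degrees of the outer map in a partial composition. -/
def outDeg (m₁ m₂ n : ℕ) (s : ℤ) (d : Fin (m₁ + n + m₂) → ℤ) : Fin (m₁ + 1 + m₂) → ℤ :=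
  Fin.append
    (Fin.append (fun j : Fin m₁ => d (Fin.castAdd m₂ (Fin.castAdd n j)))
      (fun _ : Fin 1 => s + ∑ j : Fin n, d (Fin.castAdd m₂ (Fin.natAdd m₁ j))))
    (fun j : Fin m₂ => d (Fin.natAdd (m₁ + n) j))

theorem outDeg_left (m₁ m₂ n : ℕ) (s : ℤ) (d : Fin (m₁ + n + m₂) → ℤ) (j : Fin m₁) :
    outDeg m₁ m₂ n s d (Fin.castAdd m₂ (Fin.castAdd 1 j))
      = d (Fin.castAdd m₂ (Fin.castAdd n j)) := by
  simp [outDeg, Fin.append_left]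

theorem outDeg_mid (m₁ m₂ n : ℕ) (s : ℤ) (d : Fin (m₁ + n + m₂) → ℤ) (j : Fin 1) :
    outDeg m₁ m₂ n s d (Fin.castAdd m₂ (Fin.natAdd m₁ j))
      = s + ∑ j : Fin n, d (Fin.castAdd m₂ (Fin.natAdd m₁ j)) := by
  simp [outDeg, Fin.append_left, Fin.append_right]

theorem outDeg_right (m₁ m₂ n : ℕ) (s : ℤ) (d : Fin (m₁ + n + m₂) → ℤ) (j : Fin m₂) :
    outDeg m₁ m₂ n s d (Fin.natAdd (m₁ + 1) j) = d (Fin.natAdd (m₁ + n) j) := by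
  simp [outDeg, Fin.append_right]

theorem outDeg_sum (m₁ m₂ n : ℕ) (r s : ℤ) (d : Fin (m₁ + n + m₂) → ℤ) :
    r + ∑ j, outDeg m₁ m₂ n s d j = (r + s) + ∑ j, d j := by
  simp [outDeg, Fin.sum_univ_add, Fin.append_left, Fin.append_right]
  ring

/-- Partial (operadic) composition `μ ∘_{m₁+1} ν` of `μ` (of arity `m₁ + 1 + m₂`) with `ν`
inserted in the slot `m₁ + 1`, with the Koszul sign `(-1)^(|ν|·(d 1 + ⋯ + d m₁))`. -/
def pcomp [∀ i, AddCommGroup (L i)] [∀ i, AddCommGroup (M i)] (m₁ m₂ : ℕ) {n : ℕ} {r s : ℤ}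
    (μ : MMap L M (m₁ + 1 + m₂) r) (ν : MMap L L n s) : MMap L M (m₁ + n + m₂) (r + s) :=
  fun d x =>
    ((-1 : ℤ) ^ (s * ∑ j : Fin m₁, d (Fin.castAdd m₂ (Fin.castAdd n j))).natAbs) •
    gcast (outDeg_sum m₁ m₂ n r s d)
      (μ (outDeg m₁ m₂ n s d)
        (fun j => Fin.addCases (motive := fun t => L (outDeg m₁ m₂ n s d t))
          (fun j' => Fin.addCases (motive := fun t => L (outDeg m₁ m₂ n s d (Fin.castAdd m₂ t)))
            (fun j1 => gcast (outDeg_left m₁ m₂ n s d j1).symm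
              (x (Fin.castAdd m₂ (Fin.castAdd n j1))))
            (fun j0 => gcast (outDeg_mid m₁ m₂ n s d j0).symm
              (ν (fun j2 => d (Fin.castAdd m₂ (Fin.natAdd m₁ j2)))
                 (fun j2 => x (Fin.castAdd m₂ (Fin.natAdd m₁ j2)))))
            j')
          (fun j3 => gcast (outDeg_right m₁ m₂ n s d j3).symm (x (Fin.natAdd (m₁ + n) j3)))
          j))

/-- Composition `μ ∘ g` of an arity-1 map with an arity-`a` map. -/
def comp₁ {a : ℕ} {r s : ℤ} (μ : MMap M N 1 r) (g : MMap L M a s) : MMap L N a (r + s) :=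
  fun d x =>
    gcast (by rw [Fin.sum_univ_one]; ring)
      (μ (fun _ : Fin 1 => s + ∑ j, d j) (fun _ => g d x))

theorem sum2 (a b : ℕ) (r s₁ s₂ : ℤ) (d : Fin (a + b) → ℤ) :
    r + ∑ t : Fin 2, ![s₁ + ∑ j : Fin a, d (Fin.castAdd b j),
                       s₂ + ∑ j : Fin b, d (Fin.natAdd a j)] t
      = (r + (s₁ + s₂)) + ∑ j, d j := by
  simp [Fin.sum_univ_two, Fin.sum_univ_add]
  ring

/-- Full composition `μ ∘ (g₁, g₂)` with Koszul signs. -/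
def comp₂ [∀ i, AddCommGroup (N i)] {a b : ℕ} {r s₁ s₂ : ℤ}
    (μ : MMap M N 2 r) (g₁ : MMap L M a s₁) (g₂ : MMap L M b s₂) :
    MMap L N (a + b) (r + (s₁ + s₂)) :=
  fun d x =>
    ((-1 : ℤ) ^ (s₂ * ∑ j : Fin a, d (Fin.castAdd b j)).natAbs) •
    gcast (sum2 a b r s₁ s₂ d)
      (μ ![s₁ + ∑ j : Fin a, d (Fin.castAdd b j), s₂ + ∑ j : Fin b, d (Fin.natAdd a j)]
        (Fin.cons (gcast (by simp) (g₁ (fun j => d (Fin.castAdd b j)) (fun j => x (Fin.castAdd b j))))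
          (fun _ : Fin 1 => gcast (by simp) (g₂ (fun j => d (Fin.natAdd a j)) (fun j => x (Fin.natAdd a j))))))

theorem sum3 (a b c : ℕ) (r s₁ s₂ s₃ : ℤ) (d : Fin (a + b + c) → ℤ) :
    r + ∑ t : Fin 3, ![s₁ + ∑ j : Fin a, d (Fin.castAdd c (Fin.castAdd b j)),
                       s₂ + ∑ j : Fin b, d (Fin.castAdd c (Fin.natAdd a j)),
                       s₃ + ∑ j : Fin c, d (Fin.natAdd (a + b) j)] t
      = (r + (s₁ + s₂ + s₃)) + ∑ j, d j := by
  simp [Fin.sum_univ_three, Fin.sum_univ_add]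
  ring

/-- Full composition `μ ∘ (g₁, g₂, g₃)` with Koszul signs. -/
def comp₃ [∀ i, AddCommGroup (N i)] {a b c : ℕ} {r s₁ s₂ s₃ : ℤ}
    (μ : MMap M N 3 r) (g₁ : MMap L M a s₁) (g₂ : MMap L M b s₂) (g₃ : MMap L M c s₃) :
    MMap L N (a + b + c) (r + (s₁ + s₂ + s₃)) :=
  fun d x =>
    ((-1 : ℤ) ^ (s₂ * (∑ j : Fin a, d (Fin.castAdd c (Fin.castAdd b j)))
        + s₃ * ((∑ j : Fin a, d (Fin.castAdd c (Fin.castAdd b j)))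
          + ∑ j : Fin b, d (Fin.castAdd c (Fin.natAdd a j)))).natAbs) •
    gcast (sum3 a b c r s₁ s₂ s₃ d)
      (μ ![s₁ + ∑ j : Fin a, d (Fin.castAdd c (Fin.castAdd b j)),
           s₂ + ∑ j : Fin b, d (Fin.castAdd c (Fin.natAdd a j)),
           s₃ + ∑ j : Fin c, d (Fin.natAdd (a + b) j)]
        (Fin.cons (gcast (by simp)
            (g₁ (fun j => d (Fin.castAdd c (Fin.castAdd b j)))
                (fun j => x (Fin.castAdd c (Fin.castAdd b j)))))
          (Fin.cons (gcast (by simp)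
              (g₂ (fun j => d (Fin.castAdd c (Fin.natAdd a j)))
                  (fun j => x (Fin.castAdd c (Fin.natAdd a j)))))
            (fun _ : Fin 1 => gcast (by simp)
              (g₃ (fun j => d (Fin.natAdd (a + b) j))
                  (fun j => x (Fin.natAdd (a + b) j)))))))

theorem sum4 (a b c e : ℕ) (r s₁ s₂ s₃ s₄ : ℤ) (d : Fin (a + b + c + e) → ℤ) :
    r + ∑ t : Fin 4, ![s₁ + ∑ j : Fin a, d (Fin.castAdd e (Fin.castAdd c (Fin.castAdd b j))),
                       s₂ + ∑ j : Fin b, d (Fin.castAdd e (Fin.castAdd c (Fin.natAdd a j))),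
                       s₃ + ∑ j : Fin c, d (Fin.castAdd e (Fin.natAdd (a + b) j)),
                       s₄ + ∑ j : Fin e, d (Fin.natAdd (a + b + c) j)] t
      = (r + (s₁ + s₂ + s₃ + s₄)) + ∑ j, d j := by
  simp [Fin.sum_univ_four, Fin.sum_univ_add]
  ring

/-- Full composition `μ ∘ (g₁, g₂, g₃, g₄)` with Koszul signs. -/
def comp₄ [∀ i, AddCommGroup (N i)] {a b c e : ℕ} {r s₁ s₂ s₃ s₄ : ℤ}
    (μ : MMap M N 4 r) (g₁ : MMap L M a s₁) (g₂ : MMap L M b s₂) (g₃ : MMap L M c s₃)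
    (g₄ : MMap L M e s₄) :
    MMap L N (a + b + c + e) (r + (s₁ + s₂ + s₃ + s₄)) :=
  fun d x =>
    ((-1 : ℤ) ^ (s₂ * (∑ j : Fin a, d (Fin.castAdd e (Fin.castAdd c (Fin.castAdd b j))))
        + s₃ * ((∑ j : Fin a, d (Fin.castAdd e (Fin.castAdd c (Fin.castAdd b j))))
          + ∑ j : Fin b, d (Fin.castAdd e (Fin.castAdd c (Fin.natAdd a j))))
        + s₄ * ((∑ j : Fin a, d (Fin.castAdd e (Fin.castAdd c (Fin.castAdd b j))))
          + (∑ j : Fin b, d (Fin.castAdd e (Fin.castAdd c (Fin.natAdd a j))))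
          + ∑ j : Fin c, d (Fin.castAdd e (Fin.natAdd (a + b) j)))).natAbs) •
    gcast (sum4 a b c e r s₁ s₂ s₃ s₄ d)
      (μ ![s₁ + ∑ j : Fin a, d (Fin.castAdd e (Fin.castAdd c (Fin.castAdd b j))),
           s₂ + ∑ j : Fin b, d (Fin.castAdd e (Fin.castAdd c (Fin.natAdd a j))),
           s₃ + ∑ j : Fin c, d (Fin.castAdd e (Fin.natAdd (a + b) j)),
           s₄ + ∑ j : Fin e, d (Fin.natAdd (a + b + c) j)]
        (Fin.cons (gcast (by simp)
            (g₁ (fun j => d (Fin.castAdd e (Fin.castAdd c (Fin.castAdd b j))))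
                (fun j => x (Fin.castAdd e (Fin.castAdd c (Fin.castAdd b j))))))
          (Fin.cons (gcast (by simp)
              (g₂ (fun j => d (Fin.castAdd e (Fin.castAdd c (Fin.natAdd a j))))
                  (fun j => x (Fin.castAdd e (Fin.castAdd c (Fin.natAdd a j))))))
            (Fin.cons (gcast (by simp)
                (g₃ (fun j => d (Fin.castAdd e (Fin.natAdd (a + b) j)))
                    (fun j => x (Fin.castAdd e (Fin.natAdd (a + b) j)))))
              (fun _ : Fin 1 => gcast (by simp)
                (g₄ (fun j => d (Fin.natAdd (a + b + c) j))
                    (fun j => x (Fin.natAdd (a + b + c) j))))))))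

/-- The differential `∂(μ) = D' ∘ μ - (-1)^{|μ|} ∑ᵢ μ ∘ᵢ D`. -/
def bdry [∀ i, AddCommGroup (L i)] [∀ i, AddCommGroup (M i)] {m : ℕ} {r : ℤ}
    (D' : MMap M M 1 (-1)) (D : MMap L L 1 (-1)) (μ : MMap L M m r) : MMap L M m (-1 + r) :=
  comp₁ D' μ - ((-1 : ℤ) ^ r.natAbs) •
    ∑ p : Fin m, mcast (by have := p.isLt; omega) (by ring)
      (pcomp p.val (m - 1 - p.val) (mcast (by have := p.isLt; omega) rfl μ) D)

/-- The identity, as an `MMap`. -/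
def idm : MMap L L 1 0 := fun d x => gcast (by rw [Fin.sum_univ_one, zero_add]) (x 0)

/-- `μ ∘_{m₁+1} ν`, recast to a specified target degree `R`. -/
def pc [∀ i, AddCommGroup (L i)] [∀ i, AddCommGroup (M i)] (R : ℤ) (m₁ m₂ : ℕ) {n : ℕ}
    {r s : ℤ} (μ : MMap L M (m₁ + 1 + m₂) r) (ν : MMap L L n s)
    (h : r + s = R := by norm_num) : MMap L M (m₁ + n + m₂) R :=
  mcast rfl h (pcomp m₁ m₂ μ ν)

/-- `μ ∘ g`, recast to a specified target degree `R`. -/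
def fc1 (R : ℤ) {a : ℕ} {r s : ℤ} (μ : MMap M N 1 r) (g : MMap L M a s)
    (h : r + s = R := by norm_num) : MMap L N a R :=
  mcast rfl h (comp₁ μ g)

/-- `μ ∘ (g₁, g₂)`, recast to a specified target degree `R`. -/
def fc2 [∀ i, AddCommGroup (N i)] (R : ℤ) {a b : ℕ} {r s₁ s₂ : ℤ}
    (μ : MMap M N 2 r) (g₁ : MMap L M a s₁) (g₂ : MMap L M b s₂)
    (h : r + (s₁ + s₂) = R := by norm_num) : MMap L N (a + b) R :=
  mcast rfl h (comp₂ μ g₁ g₂)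

/-- `μ ∘ (g₁, g₂, g₃)`, recast to a specified target degree `R`. -/
def fc3 [∀ i, AddCommGroup (N i)] (R : ℤ) {a b c : ℕ} {r s₁ s₂ s₃ : ℤ}
    (μ : MMap M N 3 r) (g₁ : MMap L M a s₁) (g₂ : MMap L M b s₂) (g₃ : MMap L M c s₃)
    (h : r + (s₁ + s₂ + s₃) = R := by norm_num) : MMap L N (a + b + c) R :=
  mcast rfl h (comp₃ μ g₁ g₂ g₃)

/-- `μ ∘ (g₁, g₂, g₃, g₄)`, recast to a specified target degree `R`. -/
def fc4 [∀ i, AddCommGroup (N i)] (R : ℤ) {a b c e : ℕ} {r s₁ s₂ s₃ s₄ : ℤ}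
    (μ : MMap M N 4 r) (g₁ : MMap L M a s₁) (g₂ : MMap L M b s₂) (g₃ : MMap L M c s₃)
    (g₄ : MMap L M e s₄) (h : r + (s₁ + s₂ + s₃ + s₄) = R := by norm_num) :
    MMap L N (a + b + c + e) R :=
  mcast rfl h (comp₄ μ g₁ g₂ g₃ g₄)

/-- `∂(μ)`, recast to a specified target degree `R`. -/
def bd [∀ i, AddCommGroup (L i)] [∀ i, AddCommGroup (M i)] (R : ℤ) {m : ℕ} {r : ℤ}
    (D' : MMap M M 1 (-1)) (D : MMap L L 1 (-1)) (μ : MMap L M m r)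
    (h : -1 + r = R := by norm_num) : MMap L M m R :=
  mcast rfl h (bdry D' D μ)

/-- Multilinearity over `k` of the components of an `MMap`. -/
def IsMultilinear (k : Type) [CommRing k] {L M : ℤ → Type} [∀ i, AddCommGroup (L i)]
    [∀ i, AddCommGroup (M i)] [∀ i, Module k (L i)] [∀ i, Module k (M i)] {m : ℕ} {r : ℤ}
    (μ : MMap L M m r) : Prop :=
  ∀ (d : Fin m → ℤ) (x : ∀ j, L (d j)) (j : Fin m),
    (∀ a b : L (d j), μ d (Function.update x j (a + b))
        = μ d (Function.update x j a) + μ d (Function.update x j b)) ∧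
    (∀ (c : k) (a : L (d j)), μ d (Function.update x j (c • a)) = c • μ d (Function.update x j a))

/-! ## Permutations (0-indexed; a cycle `(a b c)` is `swap a b * swap b c`) -/

def P12 (m : ℕ) [NeZero m] : Equiv.Perm (Fin m) := Equiv.swap 0 1
def P13 (m : ℕ) [NeZero m] : Equiv.Perm (Fin m) := Equiv.swap 0 2
def P23 (m : ℕ) [NeZero m] : Equiv.Perm (Fin m) := Equiv.swap 1 2
def P34 (m : ℕ) [NeZero m] : Equiv.Perm (Fin m) := Equiv.swap 2 3
def P123 (m : ℕ) [NeZero m] : Equiv.Perm (Fin m) := Equiv.swap 0 1 * Equiv.swap 1 2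
def P132 (m : ℕ) [NeZero m] : Equiv.Perm (Fin m) := Equiv.swap 0 2 * Equiv.swap 2 1
def P234 (m : ℕ) [NeZero m] : Equiv.Perm (Fin m) := Equiv.swap 1 2 * Equiv.swap 2 3
def P243 (m : ℕ) [NeZero m] : Equiv.Perm (Fin m) := Equiv.swap 1 3 * Equiv.swap 3 2
def P1234 (m : ℕ) [NeZero m] : Equiv.Perm (Fin m) :=
  Equiv.swap 0 1 * Equiv.swap 1 2 * Equiv.swap 2 3
def P1432 (m : ℕ) [NeZero m] : Equiv.Perm (Fin m) :=
  Equiv.swap 0 3 * Equiv.swap 3 2 * Equiv.swap 2 1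
def P1342 (m : ℕ) [NeZero m] : Equiv.Perm (Fin m) :=
  Equiv.swap 0 2 * Equiv.swap 2 3 * Equiv.swap 3 1
def P13P24 (m : ℕ) [NeZero m] : Equiv.Perm (Fin m) := Equiv.swap 0 2 * Equiv.swap 1 3

end WL3
namespace WL3

open Finset

variable (k : Type) [CommRing k]

/-- A Leibniz 3-algebra structure: maps `l2, l3, l4` on a complex with differential `D`
satisfying the generalized Jacobi identities (L1)–(L4). -/
structure IsLeibniz3 {L : ℤ → Type} [∀ i, AddCommGroup (L i)] [∀ i, Module k (L i)]
    (D : MMap L L 1 (-1)) (l2 : MMap L L 2 0) (l3 : MMap L L 3 1) (l4 : MMap L L 4 2) :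
    Prop where
  lin2 : IsMultilinear k l2
  lin3 : IsMultilinear k l3
  lin4 : IsMultilinear k l4
  eqL1 : bd (-1) D D l2 = 0
  eqL2 : bd 0 D D l3 =
    pc 0 1 0 l2 l2 - pc 0 0 1 l2 l2 - pa (P12 3) (pc 0 1 0 l2 l2)
  eqL3 : bd 1 D D l4 =
    pc 1 0 1 l2 l3 + pc 1 1 0 l2 l3 - pa (P12 4) (pc 1 1 0 l2 l3)
      + pa (P123 4) (pc 1 1 0 l2 l3) - pc 1 0 2 l3 l2
      + pc 1 1 1 l3 l2 - pa (P12 4) (pc 1 1 1 l3 l2)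
      - pc 1 2 0 l3 l2 + pa (P23 4) (pc 1 2 0 l3 l2) - pa (P132 4) (pc 1 2 0 l3 l2)
  eqL4 : (0 : MMap L L 5 2) =
    pc 2 0 1 l2 l4 - pc 2 1 0 l2 l4 + pa (P12 5) (pc 2 1 0 l2 l4)
      - pa (P123 5) (pc 2 1 0 l2 l4) + pa (P1234 5) (pc 2 1 0 l2 l4)
      + pc 2 0 2 l3 l3 + pc 2 1 1 l3 l3 - pa (P12 5) (pc 2 1 1 l3 l3)
      + pa (P123 5) (pc 2 1 1 l3 l3) + pc 2 2 0 l3 l3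
      - pa (P23 5) (pc 2 2 0 l3 l3) + pa (P132 5) (pc 2 2 0 l3 l3)
      + pa (P234 5) (pc 2 2 0 l3 l3) - pa (P1342 5) (pc 2 2 0 l3 l3)
      + pa (P13P24 5) (pc 2 2 0 l3 l3)
      + pc 2 0 3 l4 l2 - pc 2 1 2 l4 l2 + pa (P12 5) (pc 2 1 2 l4 l2)
      + pc 2 2 1 l4 l2 - pa (P23 5) (pc 2 2 1 l4 l2) + pa (P132 5) (pc 2 2 1 l4 l2)
      - pc 2 3 0 l4 l2 + pa (P34 5) (pc 2 3 0 l4 l2) - pa (P243 5) (pc 2 3 0 l4 l2)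
      + pa (P1432 5) (pc 2 3 0 l4 l2)

/-- A weak Lie 3-algebra: a 3-term chain complex equipped with structure maps
`l2, l3, l4, l21, l211, l31, l32` satisfying (L1)–(L4) and (W1)–(W11). -/
structure WeakLie3 (L : ℤ → Type) [∀ i, AddCommGroup (L i)] [∀ i, Module k (L i)] where
  D : MMap L L 1 (-1)
  linD : IsMultilinear k D
  dd : fc1 (-2) D D = 0
  bound : ∀ i : ℤ, (i < 0 ∨ 2 < i) → ∀ x : L i, x = 0
  l2 : MMap L L 2 0
  l3 : MMap L L 3 1
  l4 : MMap L L 4 2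
  l21 : MMap L L 2 1
  l211 : MMap L L 2 2
  l31 : MMap L L 3 2
  l32 : MMap L L 3 2
  leib : IsLeibniz3 k D l2 l3 l4
  lin21 : IsMultilinear k l21
  lin211 : IsMultilinear k l211
  lin31 : IsMultilinear k l31
  lin32 : IsMultilinear k l32
  w1 : bd 0 D D l21 = l2 + pa (P12 2) l2
  w2 : bd 1 D D l211 = l21 - pa (P12 2) l21
  w3 : bd 1 D D l31 = l3 + pa (P12 3) l3 + pc 1 0 1 l2 l21
  w4 : bd 1 D D l32 = l3 + pa (P23 3) l3 - pc 1 1 0 l2 l21 + pc 1 0 1 l21 l2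
        + pa (P12 3) (pc 1 1 0 l21 l2)
  w5 : l211 + pa (P12 2) l211 = 0
  w6 : l31 - pa (P12 3) l31 = pc 2 0 1 l2 l211
  w7 : l31 - pa (P12 3) l32 + pa (P132 3) l31 - l32 + pa (P23 3) l31 - pa (P123 3) l32
        = pc 2 1 0 l21 l21 + pc 2 0 1 l21 l21 + pa (P12 3) (pc 2 1 0 l21 l21)
          + pa (P132 3) (pc 2 1 0 l211 l2)
  w8 : l32 - pa (P23 3) l32 = - pc 2 1 0 l2 l211 + pc 2 0 1 l211 l2
        + pa (P12 3) (pc 2 1 0 l211 l2)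
  w9 : l4 + pa (P12 4) l4 = pc 2 0 1 l2 l31 - pc 2 2 0 l31 l2
        + pa (P123 4) (pc 2 1 0 l2 l31) + pc 2 0 2 l3 l21
  w10 : l4 + pa (P23 4) l4 = pc 2 0 1 l2 l32 - pc 2 1 1 l3 l21 + pc 2 1 0 l2 l31
        - pc 2 0 2 l31 l2 - pa (P12 4) (pc 2 1 1 l31 l2) - pa (P132 4) (pc 2 2 0 l31 l2)
  w11 : l4 + pa (P34 4) l4 = pc 2 0 1 l21 l3 - pc 2 0 2 l32 l2 + pc 2 1 1 l32 l2
        - pa (P12 4) (pc 2 1 1 l32 l2) + pc 2 2 0 l3 l21 + pa (P23 4) (pc 2 2 0 l32 l2)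
        - pa (P132 4) (pc 2 2 0 l32 l2) + pc 2 1 0 l2 l32 - pa (P12 4) (pc 2 1 0 l2 l32)
        + pa (P123 4) (pc 2 1 0 l21 l3)

end WL3
namespace WL3

open Finset

variable (k : Type) [CommRing k]

/-- A weak morphism of weak Lie 3-algebras `(f1,f2,f21,f3) : A → B`, i.e. a solution of
equations (M1)–(M8). -/
structure IsWeakMorphism {L M : ℤ → Type} [∀ i, AddCommGroup (L i)] [∀ i, Module k (L i)]
    [∀ i, AddCommGroup (M i)] [∀ i, Module k (M i)]
    (A : WeakLie3 k L) (B : WeakLie3 k M)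
    (f1 : MMap L M 1 0) (f2 : MMap L M 2 1) (f21 : MMap L M 2 2) (f3 : MMap L M 3 2) :
    Prop where
  lin1 : IsMultilinear k f1
  lin2 : IsMultilinear k f2
  lin21 : IsMultilinear k f21
  lin3 : IsMultilinear k f3
  m1 : bd (-1) B.D A.D f1 = 0
  m2 : bd 0 B.D A.D f2 = fc1 0 f1 A.l2 - fc2 0 B.l2 f1 f1
  m3 : bd 1 B.D A.D f3 = fc1 1 f1 A.l3 - pc 1 1 0 f2 A.l2 + pc 1 0 1 f2 A.l2
        + pa (P12 3) (pc 1 1 0 f2 A.l2) - fc3 1 B.l3 f1 f1 f1 - fc2 1 B.l2 f1 f2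
        + fc2 1 B.l2 f2 f1 + pa (P12 3) (fc2 1 B.l2 f1 f2)
  m4 : fc1 2 f1 A.l4 - fc4 2 B.l4 f1 f1 f1 f1 =
        pc 2 0 1 f2 A.l3 + pc 2 1 0 f2 A.l3 - pa (P12 4) (pc 2 1 0 f2 A.l3)
        + pa (P123 4) (pc 2 1 0 f2 A.l3) - pc 2 0 2 f3 A.l2 + pc 2 1 1 f3 A.l2
        - pa (P12 4) (pc 2 1 1 f3 A.l2) - pc 2 2 0 f3 A.l2 + pa (P23 4) (pc 2 2 0 f3 A.l2)
        - pa (P132 4) (pc 2 2 0 f3 A.l2) + fc2 2 B.l2 f3 f1 + fc2 2 B.l2 f1 f3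
        - pa (P12 4) (fc2 2 B.l2 f1 f3) + pa (P123 4) (fc2 2 B.l2 f1 f3)
        - fc2 2 B.l2 f2 f2 + pa (P23 4) (fc2 2 B.l2 f2 f2) - pa (P132 4) (fc2 2 B.l2 f2 f2)
        + fc3 2 B.l3 f2 f1 f1 - fc3 2 B.l3 f1 f2 f1 + pa (P12 4) (fc3 2 B.l3 f1 f2 f1)
        + fc3 2 B.l3 f1 f1 f2 - pa (P23 4) (fc3 2 B.l3 f1 f1 f2)
        + pa (P132 4) (fc3 2 B.l3 f1 f1 f2)
  m5 : bd 1 B.D A.D f21 = - f2 - pa (P12 2) f2 + fc1 1 f1 A.l21 - fc2 1 B.l21 f1 f1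
  m6 : fc1 2 f1 A.l211 - fc2 2 B.l211 f1 f1 = f21 - pa (P12 2) f21
  m7 : fc1 2 f1 A.l31 - fc3 2 B.l31 f1 f1 f1 =
        f3 + pa (P12 3) f3 + pc 2 0 1 f2 A.l21 + fc2 2 B.l2 f21 f1
  m8 : fc1 2 f1 A.l32 - fc3 2 B.l32 f1 f1 f1 =
        f3 + pa (P23 3) f3 - pc 2 1 0 f2 A.l21 + pc 2 0 1 f21 A.l2
        + pa (P12 3) (pc 2 1 0 f21 A.l2) - fc2 2 B.l2 f1 f21 - fc2 2 B.l21 f2 f1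
        - pa (P12 3) (fc2 2 B.l21 f1 f2)

/-- A morphism of (semi-strict) Lie 3-algebras / Leibniz 3-algebras: equations (M1)–(M4)
for structure maps `(a2,a3,a4)` on the source and `(b2,b3,b4)` on the target. -/
structure IsLeibMorphism {L M : ℤ → Type} [∀ i, AddCommGroup (L i)] [∀ i, Module k (L i)]
    [∀ i, AddCommGroup (M i)] [∀ i, Module k (M i)]
    (DL : MMap L L 1 (-1)) (DM : MMap M M 1 (-1))
    (a2 : MMap L L 2 0) (a3 : MMap L L 3 1) (a4 : MMap L L 4 2)
    (b2 : MMap M M 2 0) (b3 : MMap M M 3 1) (b4 : MMap M M 4 2)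
    (f1 : MMap L M 1 0) (f2 : MMap L M 2 1) (f3 : MMap L M 3 2) : Prop where
  lin1 : IsMultilinear k f1
  lin2 : IsMultilinear k f2
  lin3 : IsMultilinear k f3
  m1 : bd (-1) DM DL f1 = 0
  m2 : bd 0 DM DL f2 = fc1 0 f1 a2 - fc2 0 b2 f1 f1
  m3 : bd 1 DM DL f3 = fc1 1 f1 a3 - pc 1 1 0 f2 a2 + pc 1 0 1 f2 a2
        + pa (P12 3) (pc 1 1 0 f2 a2) - fc3 1 b3 f1 f1 f1 - fc2 1 b2 f1 f2
        + fc2 1 b2 f2 f1 + pa (P12 3) (fc2 1 b2 f1 f2)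
  m4 : fc1 2 f1 a4 - fc4 2 b4 f1 f1 f1 f1 =
        pc 2 0 1 f2 a3 + pc 2 1 0 f2 a3 - pa (P12 4) (pc 2 1 0 f2 a3)
        + pa (P123 4) (pc 2 1 0 f2 a3) - pc 2 0 2 f3 a2 + pc 2 1 1 f3 a2
        - pa (P12 4) (pc 2 1 1 f3 a2) - pc 2 2 0 f3 a2 + pa (P23 4) (pc 2 2 0 f3 a2)
        - pa (P132 4) (pc 2 2 0 f3 a2) + fc2 2 b2 f3 f1 + fc2 2 b2 f1 f3
        - pa (P12 4) (fc2 2 b2 f1 f3) + pa (P123 4) (fc2 2 b2 f1 f3)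
        - fc2 2 b2 f2 f2 + pa (P23 4) (fc2 2 b2 f2 f2) - pa (P132 4) (fc2 2 b2 f2 f2)
        + fc3 2 b3 f2 f1 f1 - fc3 2 b3 f1 f2 f1 + pa (P12 4) (fc3 2 b3 f1 f2 f1)
        + fc3 2 b3 f1 f1 f2 - pa (P23 4) (fc3 2 b3 f1 f1 f2)
        + pa (P132 4) (fc3 2 b3 f1 f1 f2)

/-- A deformation retract `(p, i, h)` of `(L, D)` onto `(L', D')`:
`p`, `i` are chain maps, `id - i∘p = D∘h + h∘D` and `p∘i = id`. -/
structure IsDefRetract {L L' : ℤ → Type} [∀ i, AddCommGroup (L i)] [∀ i, Module k (L i)]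
    [∀ i, AddCommGroup (L' i)] [∀ i, Module k (L' i)]
    (D : MMap L L 1 (-1)) (D' : MMap L' L' 1 (-1))
    (p : MMap L L' 1 0) (i : MMap L' L 1 0) (h : MMap L L 1 1) : Prop where
  linp : IsMultilinear k p
  lini : IsMultilinear k i
  linh : IsMultilinear k h
  chainp : bd (-1) D' D p = 0
  chaini : bd (-1) D D' i = 0
  homotopy : idm - fc1 0 i p = fc1 0 D h + fc1 0 h D
  retract : fc1 0 p i = idm

/-- A weak Lie 2-algebra in the sense of Roytenberg (a 2-term truncation of a weak
Lie 3-algebra). -/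
structure WeakLie2 (L : ℤ → Type) [∀ i, AddCommGroup (L i)] [∀ i, Module k (L i)] where
  D : MMap L L 1 (-1)
  linD : IsMultilinear k D
  dd : fc1 (-2) D D = 0
  bound : ∀ i : ℤ, (i < 0 ∨ 1 < i) → ∀ x : L i, x = 0
  l2 : MMap L L 2 0
  l3 : MMap L L 3 1
  l21 : MMap L L 2 1
  lin2 : IsMultilinear k l2
  lin3 : IsMultilinear k l3
  lin21 : IsMultilinear k l21
  e1 : bd (-1) D D l2 = 0
  e2 : bd 0 D D l3 = pc 0 1 0 l2 l2 - pc 0 0 1 l2 l2 - pa (P12 3) (pc 0 1 0 l2 l2)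
  e3 : (0 : MMap L L 4 1) =
    pc 1 0 1 l2 l3 + pc 1 1 0 l2 l3 - pa (P12 4) (pc 1 1 0 l2 l3)
      + pa (P123 4) (pc 1 1 0 l2 l3) - pc 1 0 2 l3 l2
      + pc 1 1 1 l3 l2 - pa (P12 4) (pc 1 1 1 l3 l2)
      - pc 1 2 0 l3 l2 + pa (P23 4) (pc 1 2 0 l3 l2) - pa (P132 4) (pc 1 2 0 l3 l2)
  e4 : bd 0 D D l21 = l2 + pa (P12 2) l2
  e5 : (0 : MMap L L 2 1) = l21 - pa (P12 2) l21
  e6 : (0 : MMap L L 3 1) = l3 + pa (P12 3) l3 + pc 1 0 1 l2 l21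
  e7 : (0 : MMap L L 3 1) = l3 + pa (P23 3) l3 - pc 1 1 0 l2 l21 + pc 1 0 1 l21 l2
        + pa (P12 3) (pc 1 1 0 l21 l2)

end WL3
namespace WL3

open Finset

section Transfer

variable {k : Type} [CommRing k] {L L' : ℤ → Type}
  [∀ i, AddCommGroup (L i)] [∀ i, Module k (L i)]
  [∀ i, AddCommGroup (L' i)] [∀ i, Module k (L' i)]
variable (A : WeakLie3 k L) (p : MMap L L' 1 0) (i : MMap L' L 1 0) (h : MMap L L 1 1)

/-- `h ∘ λ2` -/
def hl2 : MMap L L 2 1 := fc1 1 h A.l2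
/-- `h ∘ λ3` -/
def hl3 : MMap L L 3 2 := fc1 2 h A.l3
/-- `h ∘ λ21` -/
def hl21 : MMap L L 2 2 := fc1 2 h A.l21

/-- Transferred `λ2' = p ∘ λ2 ∘ (i,i)`. -/
def tl2 : MMap L' L' 2 0 := fc1 0 p (fc2 0 A.l2 i i)

/-- Transferred `λ3'`. -/
def tl3 : MMap L' L' 3 1 :=
  fc1 1 p (fc3 1 A.l3 i i i)
  + fc1 1 p (fc3 1 (pc 1 0 1 A.l2 (hl2 A h)
      - (pc 1 1 0 A.l2 (hl2 A h) - pa (P12 3) (pc 1 1 0 A.l2 (hl2 A h)))) i i i)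

/-- Transferred `λ4'`. -/
def tl4 : MMap L' L' 4 2 :=
  fc1 2 p (fc4 2 A.l4 i i i i)
  - fc1 2 p (fc4 2
      (pc 2 0 1 A.l2 (hl3 A h)
        + (pc 2 1 0 A.l2 (hl3 A h) - pa (P12 4) (pc 2 1 0 A.l2 (hl3 A h))
            + pa (P123 4) (pc 2 1 0 A.l2 (hl3 A h)))
        + pc 2 0 2 A.l3 (hl2 A h)
        - (pc 2 1 1 A.l3 (hl2 A h) - pa (P12 4) (pc 2 1 1 A.l3 (hl2 A h)))
        + (pc 2 2 0 A.l3 (hl2 A h) - pa (P23 4) (pc 2 2 0 A.l3 (hl2 A h))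
            + pa (P132 4) (pc 2 2 0 A.l3 (hl2 A h)))) i i i i)
  - fc1 2 p (fc4 2
      (pc 2 0 2 (pc 1 0 1 A.l2 (hl2 A h)) (hl2 A h)
        - (pc 2 1 1 (pc 1 0 1 A.l2 (hl2 A h)) (hl2 A h)
            - pa (P12 4) (pc 2 1 1 (pc 1 0 1 A.l2 (hl2 A h)) (hl2 A h)))
        + (fc2 2 A.l2 (hl2 A h) (hl2 A h) - pa (P23 4) (fc2 2 A.l2 (hl2 A h) (hl2 A h))
            + pa (P132 4) (fc2 2 A.l2 (hl2 A h) (hl2 A h)))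
        + (pc 2 1 1 (pc 1 1 0 A.l2 (hl2 A h)) (hl2 A h)
            - pa (P12 4) (pc 2 1 1 (pc 1 1 0 A.l2 (hl2 A h)) (hl2 A h))
            + pa (P123 4) (pc 2 1 1 (pc 1 1 0 A.l2 (hl2 A h)) (hl2 A h)))
        - (pc 2 2 0 (pc 1 1 0 A.l2 (hl2 A h)) (hl2 A h)
            - pa (P12 4) (pc 2 2 0 (pc 1 1 0 A.l2 (hl2 A h)) (hl2 A h))
            + pa (P123 4) (pc 2 2 0 (pc 1 1 0 A.l2 (hl2 A h)) (hl2 A h))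
            - pa (P23 4) (pc 2 2 0 (pc 1 1 0 A.l2 (hl2 A h)) (hl2 A h))
            + pa (P132 4) (pc 2 2 0 (pc 1 1 0 A.l2 (hl2 A h)) (hl2 A h))
            - pa (P13 4) (pc 2 2 0 (pc 1 1 0 A.l2 (hl2 A h)) (hl2 A h)))) i i i i)

/-- Transferred `λ21' = p ∘ λ21 ∘ (i,i)`. -/
def tl21 : MMap L' L' 2 1 := fc1 1 p (fc2 1 A.l21 i i)

/-- Transferred `λ211' = p ∘ λ211 ∘ (i,i)`. -/
def tl211 : MMap L' L' 2 2 := fc1 2 p (fc2 2 A.l211 i i)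

/-- Transferred `λ31'`. -/
def tl31 : MMap L' L' 3 2 :=
  fc1 2 p (fc3 2 A.l31 i i i) - fc1 2 p (fc3 2 (pc 2 0 1 A.l2 (hl21 A h)) i i i)

/-- Transferred `λ32'`. -/
def tl32 : MMap L' L' 3 2 :=
  fc1 2 p (fc3 2 A.l32 i i i)
  + fc1 2 p (fc3 2 (pc 2 0 1 A.l21 (hl2 A h) + pc 2 1 0 A.l2 (hl21 A h)
      + pa (P12 3) (pc 2 1 0 A.l21 (hl2 A h))) i i i)

/-- Extension of `i`: `i₂ = -h ∘ λ2 ∘ (i,i)`. -/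
def ti2 : MMap L' L 2 1 := - fc1 1 h (fc2 0 A.l2 i i)

/-- Extension of `i`: `i₂₁ = -h ∘ λ21 ∘ (i,i)`. -/
def ti21 : MMap L' L 2 2 := - fc1 2 h (fc2 1 A.l21 i i)

/-- Extension of `i`: `i₃`. -/
def ti3 : MMap L' L 3 2 :=
  - fc1 2 h (fc3 1 A.l3 i i i)
  - fc1 2 h (fc3 1 (pc 1 0 1 A.l2 (hl2 A h)
      - (pc 1 1 0 A.l2 (hl2 A h) - pa (P12 3) (pc 1 1 0 A.l2 (hl2 A h)))) i i i)

end Transfer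

section Skew

variable (k : Type) [CommRing k] [Invertible (2 : k)] [Invertible (3 : k)]
variable {L M : ℤ → Type} [∀ i, AddCommGroup (L i)] [∀ i, Module k (L i)]
  [∀ i, AddCommGroup (M i)] [∀ i, Module k (M i)]

/-- Skew-symmetrization `λ̄2` of a weak Lie 3-algebra. -/
def skew2 (A : WeakLie3 k L) : MMap L L 2 0 :=
  (⅟ (2 : k)) • ∑ σ : Equiv.Perm (Fin 2), (Equiv.Perm.sign σ : ℤ) • pa σ A.l2

/-- Skew-symmetrization `λ̄3` of a weak Lie 3-algebra. -/
def skew3 (A : WeakLie3 k L) : MMap L L 3 1 :=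
  (⅟ (2 : k) * ⅟ (3 : k)) • ∑ σ : Equiv.Perm (Fin 3), (Equiv.Perm.sign σ : ℤ) • pa σ A.l3
  - (⅟ (2 : k) * ⅟ (2 : k) * ⅟ (2 : k) * ⅟ (3 : k)) •
      ∑ σ : Equiv.Perm (Fin 3), (Equiv.Perm.sign σ : ℤ) •
        pa σ (pc 1 0 1 A.l21 A.l2 + pc 1 1 0 A.l21 A.l2)

/-- Skew-symmetrization `λ̄4` of a weak Lie 3-algebra. -/
def skew4 (A : WeakLie3 k L) : MMap L L 4 2 :=
  (⅟ (2 : k) * ⅟ (2 : k) * ⅟ (2 : k) * ⅟ (3 : k)) •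
      ∑ σ : Equiv.Perm (Fin 4), (Equiv.Perm.sign σ : ℤ) • pa σ A.l4
  + (⅟ (2 : k) * ⅟ (2 : k) * ⅟ (2 : k) * ⅟ (2 : k) * ⅟ (3 : k)) •
      ∑ σ : Equiv.Perm (Fin 4), (Equiv.Perm.sign σ : ℤ) •
        pa σ (pc 2 0 1 A.l21 A.l3 - pc 2 0 2 A.l31 A.l2 + pc 2 1 1 A.l32 A.l2
          - pc 2 1 0 A.l21 A.l3 - pc 2 1 1 A.l31 A.l2 + pc 2 2 0 A.l32 A.l2)

/-- Skew-symmetrization `f̄2` of the second component of a weak morphism. -/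
def skewMor2 (f2 : MMap L M 2 1) : MMap L M 2 1 :=
  (⅟ (2 : k)) • ∑ σ : Equiv.Perm (Fin 2), (Equiv.Perm.sign σ : ℤ) • pa σ f2

/-- Skew-symmetrization `f̄3` of the third component of a weak morphism `A → B`. -/
def skewMor3 (A : WeakLie3 k L) (B : WeakLie3 k M) (f1 : MMap L M 1 0) (f2 : MMap L M 2 1)
    (f21 : MMap L M 2 2) (f3 : MMap L M 3 2) : MMap L M 3 2 :=
  (⅟ (2 : k) * ⅟ (3 : k)) • ∑ σ : Equiv.Perm (Fin 3), (Equiv.Perm.sign σ : ℤ) • pa σ f3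
  - (⅟ (2 : k) * ⅟ (2 : k) * ⅟ (2 : k) * ⅟ (3 : k)) •
      ∑ σ : Equiv.Perm (Fin 3), (Equiv.Perm.sign σ : ℤ) •
        pa σ (pc 2 0 1 f21 A.l2 + pc 2 1 0 f21 A.l2
          - fc2 2 B.l21 f2 f1 - fc2 2 B.l21 f1 f2)

end Skew

section Comp

variable {k : Type} [CommRing k] {L M N : ℤ → Type}
  [∀ i, AddCommGroup (L i)] [∀ i, Module k (L i)]
  [∀ i, AddCommGroup (M i)] [∀ i, Module k (M i)]
  [∀ i, AddCommGroup (N i)] [∀ i, Module k (N i)]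

/-- First component of the composition of weak morphisms. -/
def cmp1 (f1' : MMap M N 1 0) (f1 : MMap L M 1 0) : MMap L N 1 0 := fc1 0 f1' f1

/-- Second component of the composition of weak morphisms. -/
def cmp2 (f1' : MMap M N 1 0) (f2' : MMap M N 2 1) (f1 : MMap L M 1 0) (f2 : MMap L M 2 1) :
    MMap L N 2 1 := fc2 1 f2' f1 f1 + fc1 1 f1' f2

/-- `(f'∘f)21` component of the composition of weak morphisms. -/
def cmp21 (f1' : MMap M N 1 0) (f21' : MMap M N 2 2) (f1 : MMap L M 1 0)
    (f21 : MMap L M 2 2) : MMap L N 2 2 := fc2 2 f21' f1 f1 + fc1 2 f1' f21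

/-- Third component of the composition of weak morphisms. -/
def cmp3 (f1' : MMap M N 1 0) (f2' : MMap M N 2 1) (f3' : MMap M N 3 2)
    (f1 : MMap L M 1 0) (f2 : MMap L M 2 1) (f3 : MMap L M 3 2) : MMap L N 3 2 :=
  fc3 2 f3' f1 f1 f1 - fc2 2 f2' f2 f1 + fc2 2 f2' f1 f2 - pa (P12 3) (fc2 2 f2' f1 f2)
    + fc1 2 f1' f3

end Comp

end WL3
namespace WL3

/-! ## The 3-term complex associated to a CLWX 2-algebroid -/

/-- The graded object with `E0` in degree 0, `E1` in degree 1, `R` in degree 2. -/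
def cl (R E0 E1 : Type) : ℤ → Type
  | .ofNat 0 => E0
  | .ofNat 1 => E1
  | .ofNat 2 => R
  | .ofNat (_ + 3) => PUnit
  | .negSucc _ => PUnit

section clinst
variable (R E0 E1 : Type) [AddCommGroup R] [AddCommGroup E0] [AddCommGroup E1]

instance clACG : ∀ i : ℤ, AddCommGroup (cl R E0 E1 i)
  | .ofNat 0 => inferInstanceAs (AddCommGroup E0)
  | .ofNat 1 => inferInstanceAs (AddCommGroup E1)
  | .ofNat 2 => inferInstanceAs (AddCommGroup R)
  | .ofNat (_ + 3) => inferInstanceAs (AddCommGroup PUnit)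
  | .negSucc _ => inferInstanceAs (AddCommGroup PUnit)

variable (k : Type) [CommRing k] [Module k R] [Module k E0] [Module k E1]

instance clMod : ∀ i : ℤ, Module k (cl R E0 E1 i)
  | .ofNat 0 => inferInstanceAs (Module k E0)
  | .ofNat 1 => inferInstanceAs (Module k E1)
  | .ofNat 2 => inferInstanceAs (Module k R)
  | .ofNat (_ + 3) => inferInstanceAs (Module k PUnit)
  | .negSucc _ => inferInstanceAs (Module k PUnit)

end clinst

section clmaps
variable {R E0 E1 : Type}

def getE0 {i : ℤ} (h : i = 0) (v : cl R E0 E1 i) : E0 := by subst h; exact v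
def getE1 {i : ℤ} (h : i = 1) (v : cl R E0 E1 i) : E1 := by subst h; exact v
def getR {i : ℤ} (h : i = 2) (v : cl R E0 E1 i) : R := by subst h; exact v
def put0 {i : ℤ} (h : i = 0) (v : E0) : cl R E0 E1 i := by subst h; exact v
def put1 {i : ℤ} (h : i = 1) (v : E1) : cl R E0 E1 i := by subst h; exact v
def put2 {i : ℤ} (h : i = 2) (v : R) : cl R E0 E1 i := by subst h; exact v

variable [AddCommGroup R] [AddCommGroup E0] [AddCommGroup E1]
variable (k : Type) [CommRing k] [Module k R] [Module k E0] [Module k E1]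

/-- The differential of the complex `E0 ← E1 ← R` as an `MMap`, from `∂` and `D`. -/
def mkD (pd : E1 → E0) (Dm : R → E1) : MMap (cl R E0 E1) (cl R E0 E1) 1 (-1) :=
  fun d x =>
    if h1 : d 0 = 1 then
      put0 (by rw [Fin.sum_univ_one, h1]; norm_num) (pd (getE1 h1 (x 0)))
    else if h2 : d 0 = 2 then
      put1 (by rw [Fin.sum_univ_one, h2]; norm_num) (Dm (getR h2 (x 0)))
    else 0

/-- `λ2` built from `∘` (its components `c00, c01, c10`) and `λ2(x,f) = S(x,Df)`. -/
def mkl2 (c00 : E0 → E0 → E0) (c01 : E0 → E1 → E1) (c10 : E1 → E0 → E1)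
    (S : E0 → E1 → R) (Dm : R → E1) : MMap (cl R E0 E1) (cl R E0 E1) 2 0 :=
  fun d x =>
    if h : d 0 = 0 ∧ d 1 = 0 then
      put0 (by rw [Fin.sum_univ_two, h.1, h.2]; norm_num)
        (c00 (getE0 h.1 (x 0)) (getE0 h.2 (x 1)))
    else if h : d 0 = 0 ∧ d 1 = 1 then
      put1 (by rw [Fin.sum_univ_two, h.1, h.2]; norm_num)
        (c01 (getE0 h.1 (x 0)) (getE1 h.2 (x 1)))
    else if h : d 0 = 1 ∧ d 1 = 0 then
      put1 (by rw [Fin.sum_univ_two, h.1, h.2]; norm_num)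
        (c10 (getE1 h.1 (x 0)) (getE0 h.2 (x 1)))
    else if h : d 0 = 0 ∧ d 1 = 2 then
      put2 (by rw [Fin.sum_univ_two, h.1, h.2]; norm_num)
        (S (getE0 h.1 (x 0)) (Dm (getR h.2 (x 1))))
    else 0

/-- `λ21` built from the pairing `S` (symmetrically on `E0 ⊗ E1` and `E1 ⊗ E0`). -/
def mkl21 (S : E0 → E1 → R) : MMap (cl R E0 E1) (cl R E0 E1) 2 1 :=
  fun d x =>
    if h : d 0 = 0 ∧ d 1 = 1 then
      put2 (by rw [Fin.sum_univ_two, h.1, h.2]; norm_num)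
        (S (getE0 h.1 (x 0)) (getE1 h.2 (x 1)))
    else if h : d 0 = 1 ∧ d 1 = 0 then
      put2 (by rw [Fin.sum_univ_two, h.1, h.2]; norm_num)
        (S (getE0 h.2 (x 1)) (getE1 h.1 (x 0)))
    else 0

/-- `λ3` built from `Ω` on `E0 ⊗ E0 ⊗ E0`. -/
def mkl3 (Om : E0 → E0 → E0 → E1) : MMap (cl R E0 E1) (cl R E0 E1) 3 1 :=
  fun d x =>
    if h : d 0 = 0 ∧ d 1 = 0 ∧ d 2 = 0 then
      put1 (by rw [Fin.sum_univ_three, h.1, h.2.1, h.2.2]; norm_num)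
        (Om (getE0 h.1 (x 0)) (getE0 h.2.1 (x 1)) (getE0 h.2.2 (x 2)))
    else 0

end clmaps

end WL3

namespace WL3

theorem koszulSign_eq_one {m : ℕ} {d : Fin m → ℤ} (σ : Equiv.Perm (Fin m))
    (h : ∀ i j, i < j → d i * d j = 0) : koszulSign d σ = 1 :=
  Finset.prod_eq_one fun p hp => by
    rw [h _ _ (Finset.mem_filter.1 hp).2.1, Int.natAbs_zero, pow_zero]

section Flatten

variable {R E0 E1 : Type} [AddCommGroup R] [AddCommGroup E0] [AddCommGroup E1]
variable (k : Type) [CommRing k] [Module k R] [Module k E0] [Module k E1]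

/-- The inclusion of the homogeneous elements of degree `i` of the complex `E0 ← E1 ← R` into
its total space. -/
def emb : ∀ i : ℤ, cl R E0 E1 i →ₗ[k] E0 × E1 × R
  | .ofNat 0 => LinearMap.inl k E0 (E1 × R)
  | .ofNat 1 => LinearMap.inr k E0 (E1 × R) ∘ₗ LinearMap.inl k E1 R
  | .ofNat 2 => LinearMap.inr k E0 (E1 × R) ∘ₗ LinearMap.inr k E1 R
  | .ofNat (_ + 3) => 0
  | .negSucc _ => 0

theorem emb_injective : ∀ i : ℤ, Function.Injective (emb (R := R) (E0 := E0) (E1 := E1) k i)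
  | .ofNat 0 => fun _ _ h => congrArg (fun t : E0 × E1 × R => t.1) h
  | .ofNat 1 => fun _ _ h => congrArg (fun t : E0 × E1 × R => t.2.1) h
  | .ofNat 2 => fun _ _ h => congrArg (fun t : E0 × E1 × R => t.2.2) h
  | .ofNat (_ + 3) => fun _ _ _ => rfl
  | .negSucc _ => fun _ _ _ => rfl

theorem cl_eq_zero : ∀ i : ℤ, (i < 0 ∨ 2 < i) → ∀ x : cl R E0 E1 i, x = 0
  | .ofNat 0, h, _ => absurd h (by decide)
  | .ofNat 1, h, _ => absurd h (by decide)
  | .ofNat 2, h, _ => absurd h (by decide)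
  | .ofNat (_ + 3), _, _ => rfl
  | .negSucc _, _, _ => rfl

theorem emb_put0 {i : ℤ} (h : i = 0) (v : E0) :
    emb k i (put0 (R := R) (E1 := E1) h v) = (v, 0, 0) := by
  subst h; rfl

theorem emb_put1 {i : ℤ} (h : i = 1) (v : E1) :
    emb k i (put1 (R := R) (E0 := E0) h v) = (0, v, 0) := by
  subst h; rfl

theorem emb_put2 {i : ℤ} (h : i = 2) (v : R) :
    emb k i (put2 (E0 := E0) (E1 := E1) h v) = (0, 0, v) := by
  subst h; rfl

theorem emb_eq_of_zero {i : ℤ} (h : i = 0) (v : cl R E0 E1 i) :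
    emb k i v = (getE0 h v, 0, 0) := by
  subst h; rfl

theorem emb_eq_of_one {i : ℤ} (h : i = 1) (v : cl R E0 E1 i) :
    emb k i v = (0, getE1 h v, 0) := by
  subst h; rfl

theorem emb_eq_of_two {i : ℤ} (h : i = 2) (v : cl R E0 E1 i) :
    emb k i v = (0, 0, getR h v) := by
  subst h; rfl

theorem emb_gcast {i j : ℤ} (h : i = j) (v : cl R E0 E1 i) :
    emb k j (gcast h v) = emb k i v := by
  subst h; rfl

/-- `t` is homogeneous of degree `i` in the total space of `E0 ← E1 ← R`. -/
def IsHomog (i : ℤ) (t : E0 × E1 × R) : Prop :=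
  t = 0 ∨ (i = 0 ∧ ∃ x, t = (x, 0, 0)) ∨ (i = 1 ∧ ∃ a, t = (0, a, 0)) ∨
    (i = 2 ∧ ∃ f, t = (0, 0, f))

theorem isHomog_emb (i : ℤ) (v : cl R E0 E1 i) : IsHomog i (emb k i v) := by
  by_cases h0 : i = 0
  · exact Or.inr (Or.inl ⟨h0, _, emb_eq_of_zero k h0 v⟩)
  by_cases h1 : i = 1
  · exact Or.inr (Or.inr (Or.inl ⟨h1, _, emb_eq_of_one k h1 v⟩))
  by_cases h2 : i = 2
  · exact Or.inr (Or.inr (Or.inr ⟨h2, _, emb_eq_of_two k h2 v⟩))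
  · left
    rw [cl_eq_zero i (by omega) v, map_zero]

theorem IsHomog.fst_eq_zero {i : ℤ} {t : E0 × E1 × R} (h : IsHomog i t) (hi : i ≠ 0) :
    t.1 = 0 := by
  rcases h with rfl | ⟨h, -⟩ | ⟨-, a, rfl⟩ | ⟨-, f, rfl⟩
  · rfl
  · exact absurd h hi
  · rfl
  · rfl

/-- `F` computes the graded map `μ` on the total space; `F` may depend on the degrees of the
arguments through Koszul signs. -/
def Computes {m : ℕ} {r : ℤ} (μ : MMap (cl R E0 E1) (cl R E0 E1) m r)
    (F : (Fin m → ℤ) → (Fin m → E0 × E1 × R) → E0 × E1 × R) : Prop :=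
  ∀ d x, emb k _ (μ d x) = F d (fun j => emb k _ (x j))

namespace Computes

variable {k} {m n : ℕ} {r s : ℤ} {μ ν : MMap (cl R E0 E1) (cl R E0 E1) m r}
  {F G : (Fin m → ℤ) → (Fin m → E0 × E1 × R) → E0 × E1 × R}

theorem ext (hμ : Computes k μ F) (hν : Computes k ν G)
    (h : ∀ d x, (∀ j, IsHomog (d j) (x j)) → F d x = G d x) : μ = ν := by
  funext d x
  apply emb_injective k
  rw [hμ, hν]
  exact h _ _ fun j => isHomog_emb k _ _

theorem exists_emb {i : ℤ} {t : E0 × E1 × R} (h : IsHomog i t) : ∃ v, emb k i v = t := by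
  rcases h with rfl | ⟨rfl, x, rfl⟩ | ⟨rfl, a, rfl⟩ | ⟨rfl, f, rfl⟩
  · exact ⟨0, map_zero _⟩
  · exact ⟨x, rfl⟩
  · exact ⟨a, rfl⟩
  · exact ⟨f, rfl⟩

theorem congr_of_eq (hμ : Computes k μ F) (hν : Computes k ν G) (h : μ = ν)
    (d : Fin m → ℤ) (x : Fin m → E0 × E1 × R) (hx : ∀ j, IsHomog (d j) (x j)) :
    F d x = G d x := by
  choose v hv using fun j => exists_emb (k := k) (hx j)
  obtain rfl : (fun j => emb k _ (v j)) = x := funext hv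
  rw [← hμ, ← hν, h]

theorem zero : Computes k (0 : MMap (cl R E0 E1) (cl R E0 E1) m r) fun _ _ => 0 :=
  fun _ _ => map_zero _

theorem add (hμ : Computes k μ F) (hν : Computes k ν G) :
    Computes k (μ + ν) fun d x => F d x + G d x :=
  fun d x => (map_add _ _ _).trans (congrArg₂ _ (hμ d x) (hν d x))

theorem sub (hμ : Computes k μ F) (hν : Computes k ν G) :
    Computes k (μ - ν) fun d x => F d x - G d x :=
  fun d x => (map_sub _ _ _).trans (congrArg₂ _ (hμ d x) (hν d x))

theorem zsmul (c : ℤ) (hμ : Computes k μ F) : Computes k (c • μ) fun d x => c • F d x :=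
  fun d x => (map_zsmul _ _ _).trans (congrArg _ (hμ d x))

theorem sum {ι : Type} (t : Finset ι) {μ : ι → MMap (cl R E0 E1) (cl R E0 E1) m r}
    {F : ι → (Fin m → ℤ) → (Fin m → E0 × E1 × R) → E0 × E1 × R}
    (h : ∀ p, Computes k (μ p) (F p)) :
    Computes k (∑ p ∈ t, μ p) fun d x => ∑ p ∈ t, F p d x := fun d x => by
  rw [Finset.sum_apply, Finset.sum_apply, map_sum]
  exact Finset.sum_congr rfl fun p _ => h p d x

theorem mcast {m' : ℕ} {r' : ℤ} (hm : m = m') (hr : r = r') (hμ : Computes k μ F) :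
    Computes k (mcast hm hr μ) fun d x =>
      F (fun j => d (Fin.cast hm j)) (fun j => x (Fin.cast hm j)) := by
  subst hm hr; exact hμ

theorem pa (σ : Equiv.Perm (Fin m)) (hμ : Computes k μ F) :
    Computes k (pa σ μ) fun d x =>
      koszulSign d σ • F (fun j => d (σ.symm j)) (fun j => x (σ.symm j)) := fun d x => by
  rw [WL3.pa, map_zsmul, emb_gcast, hμ]

theorem comp₁ {D : MMap (cl R E0 E1) (cl R E0 E1) 1 s}
    {P : (Fin 1 → E0 × E1 × R) → E0 × E1 × R} (hD : Computes k D fun _ => P)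
    (hμ : Computes k μ F) : Computes k (comp₁ D μ) fun d x => P fun _ => F d x :=
  fun d x => by
    rw [WL3.comp₁, emb_gcast, hD]
    simp only [hμ d x]

/-- The arguments fed to the outer map of a partial composition. -/
def outArg (m₁ m₂ n : ℕ) (y : E0 × E1 × R) (x : Fin (m₁ + n + m₂) → E0 × E1 × R) :
    Fin (m₁ + 1 + m₂) → E0 × E1 × R :=
  Fin.append (Fin.append (fun j => x (Fin.castAdd m₂ (Fin.castAdd n j))) fun _ : Fin 1 => y)
    fun j => x (Fin.natAdd (m₁ + n) j)

theorem pcomp (m₁ m₂ : ℕ) {μ : MMap (cl R E0 E1) (cl R E0 E1) (m₁ + 1 + m₂) r}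
    {ν : MMap (cl R E0 E1) (cl R E0 E1) n s}
    {F : (Fin (m₁ + 1 + m₂) → E0 × E1 × R) → E0 × E1 × R}
    {G : (Fin n → E0 × E1 × R) → E0 × E1 × R}
    (hμ : Computes k μ fun _ => F) (hν : Computes k ν fun _ => G) :
    Computes k (pcomp m₁ m₂ μ ν) fun d x =>
      ((-1 : ℤ) ^ (s * ∑ j : Fin m₁, d (Fin.castAdd m₂ (Fin.castAdd n j))).natAbs) •
        F (outArg m₁ m₂ n (G fun j => x (Fin.castAdd m₂ (Fin.natAdd m₁ j))) x) := fun d x => by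
  rw [WL3.pcomp, map_zsmul, emb_gcast, hμ (outDeg m₁ m₂ n s d)]
  refine congrArg _ (congrArg F (funext fun j => ?_))
  refine Fin.addCases (fun j' => Fin.addCases (fun j₁ => ?left) (fun j₀ => ?mid) j')
    (fun j₃ => ?right) j
  case left => simp only [Fin.addCases_left, emb_gcast, outArg, Fin.append_left]
  case mid =>
    simp only [Fin.addCases_left, Fin.addCases_right, emb_gcast, outArg, Fin.append_left,
      Fin.append_right, hν _ _]
  case right => simp only [Fin.addCases_right, emb_gcast, outArg, Fin.append_right]

theorem pc (T : ℤ) (m₁ m₂ : ℕ) {μ : MMap (cl R E0 E1) (cl R E0 E1) (m₁ + 1 + m₂) r}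
    {ν : MMap (cl R E0 E1) (cl R E0 E1) n s}
    {F : (Fin (m₁ + 1 + m₂) → E0 × E1 × R) → E0 × E1 × R}
    {G : (Fin n → E0 × E1 × R) → E0 × E1 × R} (h : r + s = T)
    (hμ : Computes k μ fun _ => F) (hν : Computes k ν fun _ => G) :
    Computes k (pc T m₁ m₂ μ ν h) fun d x =>
      ((-1 : ℤ) ^ (s * ∑ j : Fin m₁, d (Fin.castAdd m₂ (Fin.castAdd n j))).natAbs) •
        F (outArg m₁ m₂ n (G fun j => x (Fin.castAdd m₂ (Fin.natAdd m₁ j))) x) :=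
  (pcomp m₁ m₂ hμ hν).mcast rfl h

theorem fc1 (T : ℤ) {D : MMap (cl R E0 E1) (cl R E0 E1) 1 s}
    {P : (Fin 1 → E0 × E1 × R) → E0 × E1 × R} (h : s + r = T)
    (hD : Computes k D fun _ => P) (hμ : Computes k μ F) :
    Computes k (fc1 T D μ h) fun d x => P fun _ => F d x :=
  (comp₁ hD hμ).mcast rfl h

omit [AddCommGroup R] [AddCommGroup E0] [AddCommGroup E1] in
theorem outArg_cast {m₁ m₂ : ℕ} (h : m₁ + 1 + m₂ = m) (y : E0 × E1 × R)
    (x : Fin m → E0 × E1 × R) (j : Fin (m₁ + 1 + m₂)) :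
    outArg m₁ m₂ 1 y (fun j => x (Fin.cast h j)) j =
      Function.update x ⟨m₁, by omega⟩ y (Fin.cast h j) := by
  subst h
  refine Fin.addCases (fun j' => Fin.addCases (fun j₁ => ?left) (fun j₀ => ?mid) j')
    (fun j₃ => ?right) j
  case left =>
    rw [Function.update_of_ne (Fin.ne_of_val_ne j₁.isLt.ne)]
    simp [outArg]
  case mid =>
    have : (⟨m₁, by omega⟩ : Fin (m₁ + 1 + m₂)) = Fin.castAdd m₂ (Fin.natAdd m₁ j₀) :=
      Fin.ext (by simp)
    simp [outArg, this]
  case right =>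
    rw [Function.update_of_ne (Fin.ne_of_val_ne (by simp; omega))]
    simp [outArg]

theorem bd (T : ℤ) {D : MMap (cl R E0 E1) (cl R E0 E1) 1 (-1)}
    {P : (Fin 1 → E0 × E1 × R) → E0 × E1 × R} {F : (Fin m → E0 × E1 × R) → E0 × E1 × R}
    (h : -1 + r = T) (hD : Computes k D fun _ => P) (hμ : Computes k μ fun _ => F) :
    Computes k (bd T D D μ h) fun d x =>
      (P fun _ => F x) - ((-1 : ℤ) ^ r.natAbs) • ∑ p : Fin m,
        ((-1 : ℤ) ^ (∑ j : Fin p.val, d (Fin.castLE p.isLt.le j)).natAbs) •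
          F (Function.update x p (P fun _ => x p)) := by
  have key : ∀ p : Fin m, Computes k
      (WL3.mcast (by have := p.isLt; omega) (by ring) (WL3.pcomp p.val (m - 1 - p.val)
        (WL3.mcast (by have := p.isLt; omega) rfl μ) D) : MMap _ _ m (-1 + r))
      fun d x => ((-1 : ℤ) ^ (∑ j : Fin p.val, d (Fin.castLE p.isLt.le j)).natAbs) •
        F (Function.update x p (P fun _ => x p)) := by
    intro p d x
    have h₁ : m = p.val + 1 + (m - 1 - p.val) := by have := p.isLt; omega
    refine (Computes.mcast h₁.symm (show r + -1 = -1 + r by ring)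
      (pcomp p.val (m - 1 - p.val) (Computes.mcast h₁ rfl hμ) hD) d x).trans ?_
    simp only [neg_mul, one_mul, Int.natAbs_neg]
    refine congrArg₂ _ rfl (congrArg F (funext fun j => ?_))
    refine (outArg_cast h₁.symm _ (fun j => emb k _ (x j)) (Fin.cast h₁ j)).trans ?_
    refine congrArg (fun z => Function.update (fun j => emb k _ (x j)) p (P z) j)
      (funext fun i => congrArg (fun j => emb k _ (x j)) (Fin.ext ?_))
    simp
  exact Computes.mcast rfl h (sub (comp₁ hD hμ) (zsmul _ (sum Finset.univ key)))

end Computes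

/-- The differential on the total space. -/
def totD (pd : E1 →ₗ[k] E0) (Dm : R →ₗ[k] E1) (x : Fin 1 → E0 × E1 × R) : E0 × E1 × R :=
  (pd (x 0).2.1, Dm (x 0).2.2, 0)

/-- The bracket `λ2` on the total space. -/
def totl2 (c00 : E0 →ₗ[k] E0 →ₗ[k] E0) (c01 : E0 →ₗ[k] E1 →ₗ[k] E1) (c10 : E1 →ₗ[k] E0 →ₗ[k] E1)
    (S : E0 →ₗ[k] E1 →ₗ[k] R) (Dm : R →ₗ[k] E1) (x : Fin 2 → E0 × E1 × R) : E0 × E1 × R :=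
  (c00 (x 0).1 (x 1).1, c01 (x 0).1 (x 1).2.1 + c10 (x 0).2.1 (x 1).1,
    S (x 0).1 (Dm (x 1).2.2))

/-- The symmetric pairing `λ21` on the total space. -/
def totl21 (S : E0 →ₗ[k] E1 →ₗ[k] R) (x : Fin 2 → E0 × E1 × R) : E0 × E1 × R :=
  (0, 0, S (x 0).1 (x 1).2.1 + S (x 1).1 (x 0).2.1)

/-- The trilinear map `λ3` on the total space. -/
def totl3 (Om : E0 →ₗ[k] E0 →ₗ[k] E0 →ₗ[k] E1) (x : Fin 3 → E0 × E1 × R) : E0 × E1 × R :=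
  (0, Om (x 0).1 (x 1).1 (x 2).1, 0)

variable (pd : E1 →ₗ[k] E0) (Dm : R →ₗ[k] E1)
  (c00 : E0 →ₗ[k] E0 →ₗ[k] E0) (c01 : E0 →ₗ[k] E1 →ₗ[k] E1) (c10 : E1 →ₗ[k] E0 →ₗ[k] E1)
  (S : E0 →ₗ[k] E1 →ₗ[k] R) (Om : E0 →ₗ[k] E0 →ₗ[k] E0 →ₗ[k] E1)

theorem computes_mkD :
    Computes k (mkD (fun a => pd a) fun f => Dm f) fun _ => totD k pd Dm := by
  intro d x
  unfold mkD totD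
  split_ifs with h1 h2
  · simp [emb_put0, emb_eq_of_one k h1]
  · simp [emb_put1, emb_eq_of_two k h2]
  · rcases isHomog_emb k _ (x 0) with h | ⟨-, y, h⟩ | ⟨h, -⟩ | ⟨h, -⟩
    all_goals first | contradiction | simp [h, Prod.ext_iff]

theorem computes_mkl2 :
    Computes k (mkl2 (fun x y => c00 x y) (fun x a => c01 x a) (fun a x => c10 a x)
      (fun x a => S x a) fun f => Dm f) fun _ => totl2 k c00 c01 c10 S Dm := by
  intro d x
  unfold mkl2 totl2
  split_ifs with h1 h2 h3 h4
  · simp [emb_put0, emb_eq_of_zero k h1.1, emb_eq_of_zero k h1.2]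
  · simp [emb_put1, emb_eq_of_zero k h2.1, emb_eq_of_one k h2.2]
  · simp [emb_put1, emb_eq_of_one k h3.1, emb_eq_of_zero k h3.2]
  · simp [emb_put2, emb_eq_of_zero k h4.1, emb_eq_of_two k h4.2]
  · rcases isHomog_emb k _ (x 0) with h | ⟨hd, y, h⟩ | ⟨hd, y, h⟩ | ⟨hd, y, h⟩ <;>
    rcases isHomog_emb k _ (x 1) with h' | ⟨hd', y', h'⟩ | ⟨hd', y', h'⟩ | ⟨hd', y', h'⟩ <;>
    first | (exfalso; omega) | simp [h, h', Prod.ext_iff]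

theorem computes_mkl21 :
    Computes k (mkl21 fun x a => S x a) fun _ => totl21 k S := by
  intro d x
  unfold mkl21 totl21
  split_ifs with h1 h2
  · simp [emb_put2, emb_eq_of_zero k h1.1, emb_eq_of_one k h1.2]
  · simp [emb_put2, emb_eq_of_one k h2.1, emb_eq_of_zero k h2.2]
  · rcases isHomog_emb k _ (x 0) with h | ⟨hd, y, h⟩ | ⟨hd, y, h⟩ | ⟨hd, y, h⟩ <;>
    rcases isHomog_emb k _ (x 1) with h' | ⟨hd', y', h'⟩ | ⟨hd', y', h'⟩ | ⟨hd', y', h'⟩ <;>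
    first | (exfalso; omega) | simp [h, h', Prod.ext_iff]

theorem computes_mkl3 :
    Computes k (mkl3 (R := R) fun x y z => Om x y z) fun _ => totl3 k Om := by
  intro d x
  unfold mkl3 totl3
  split_ifs with h
  · simp [emb_put1, emb_eq_of_zero k h.1, emb_eq_of_zero k h.2.1, emb_eq_of_zero k h.2.2]
  · have h' : d 0 ≠ 0 ∨ d 1 ≠ 0 ∨ d 2 ≠ 0 := by tauto
    rcases h' with h' | h' | h' <;> simp [(isHomog_emb k _ (x _)).fst_eq_zero h', Prod.ext_iff]

theorem Computes.isMultilinear {m : ℕ} {r : ℤ} {μ : MMap (cl R E0 E1) (cl R E0 E1) m r}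
    {F : (Fin m → E0 × E1 × R) → E0 × E1 × R} (hμ : Computes k μ fun _ => F)
    (hadd : ∀ x j a b, F (Function.update x j (a + b)) =
      F (Function.update x j a) + F (Function.update x j b))
    (hsmul : ∀ x j (c : k) a, F (Function.update x j (c • a)) = c • F (Function.update x j a)) :
    IsMultilinear k μ := by
  intro d x j
  have upd : ∀ a, (fun i => emb k _ (Function.update x j a i)) =
      Function.update (fun i => emb k _ (x i)) j (emb k _ a) := fun a => by
    funext i
    exact Function.apply_update (fun i => emb k (d i)) x j a i
  refine ⟨fun a b => emb_injective k _ ?_, fun c a => emb_injective k _ ?_⟩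
  · rw [map_add]
    simp only [hμ _ _, upd, map_add, hadd]
  · rw [map_smul]
    simp only [hμ _ _, upd, map_smul, hsmul]

theorem isMultilinear_zero {m : ℕ} {r : ℤ} :
    IsMultilinear k (0 : MMap (cl R E0 E1) (cl R E0 E1) m r) :=
  fun _ _ _ => ⟨fun _ _ => (add_zero _).symm, fun c _ => (smul_zero c).symm⟩

theorem isMultilinear_mkD : IsMultilinear k (mkD (fun a => pd a) fun f => Dm f) := by
  refine (computes_mkD k pd Dm).isMultilinear k (fun x j a b => ?_) (fun x j c a => ?_) <;>
  fin_cases j <;> simp [totD]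

theorem isMultilinear_mkl2 :
    IsMultilinear k (mkl2 (fun x y => c00 x y) (fun x a => c01 x a) (fun a x => c10 a x)
      (fun x a => S x a) fun f => Dm f) := by
  refine (computes_mkl2 k Dm c00 c01 c10 S).isMultilinear k (fun x j a b => ?_)
    (fun x j c a => ?_) <;>
  fin_cases j <;> simp [totl2] <;> abel

theorem isMultilinear_mkl21 : IsMultilinear k (mkl21 fun x a => S x a) := by
  refine (computes_mkl21 k S).isMultilinear k (fun x j a b => ?_) (fun x j c a => ?_) <;>
  fin_cases j <;> simp [totl21] <;> abel

theorem isMultilinear_mkl3 : IsMultilinear k (mkl3 (R := R) fun x y z => Om x y z) := by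
  refine (computes_mkl3 k Om).isMultilinear k (fun x j a b => ?_) (fun x j c a => ?_) <;>
  fin_cases j <;> simp [totl3]

end Flatten

theorem koszulSign_P12_two {d : Fin 2 → ℤ} (h : d 0 = 0 ∨ d 1 = 0) :
    koszulSign d (P12 2) = 1 := by
  refine koszulSign_eq_one _ fun i j hij => ?_
  obtain ⟨rfl, rfl⟩ : i = 0 ∧ j = 1 := by omega
  exact mul_eq_zero.2 h

theorem koszulSign_P12_three {d : Fin 3 → ℤ} (h : d 0 = 0 ∨ d 1 = 0) :
    koszulSign d (P12 3) = 1 := by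
  refine Finset.prod_eq_one fun p hp => ?_
  obtain rfl : p = (0, 1) := by
    have := (Finset.mem_filter.1 hp).2
    clear hp
    revert p
    decide
  rw [mul_eq_zero.2 h, Int.natAbs_zero, pow_zero]

theorem P12_symm_two (j : Fin 2) : (P12 2).symm j = ![1, 0] j := by decide +revert

theorem P12_symm_three (j : Fin 3) : (P12 3).symm j = ![1, 0, 2] j := by decide +revert

theorem P23_symm_three (j : Fin 3) : (P23 3).symm j = ![0, 2, 1] j := by decide +revert

theorem P12_symm_four (j : Fin 4) : (P12 4).symm j = ![1, 0, 2, 3] j := by decide +revert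

theorem P23_symm_four (j : Fin 4) : (P23 4).symm j = ![0, 2, 1, 3] j := by decide +revert

theorem P123_symm_four (j : Fin 4) : (P123 4).symm j = ![2, 0, 1, 3] j := by decide +revert

theorem P132_symm_four (j : Fin 4) : (P132 4).symm j = ![1, 2, 0, 3] j := by decide +revert

theorem gcast_zero {M : ℤ → Type} [∀ i, AddCommGroup (M i)] {i j : ℤ} (h : i = j) :
    gcast h (0 : M i) = 0 := by
  subst h; rfl

theorem pa_zero {L M : ℤ → Type} [∀ i, AddCommGroup (M i)] {m : ℕ} {r : ℤ}
    (σ : Equiv.Perm (Fin m)) : pa σ (0 : MMap L M m r) = 0 := by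
  funext d x
  simp [pa, gcast_zero]

theorem pc_zero_left {L M : ℤ → Type} [∀ i, AddCommGroup (L i)] [∀ i, AddCommGroup (M i)]
    {m₁ m₂ n : ℕ} {r s T : ℤ} (ν : MMap L L n s) (h : r + s = T) :
    pc T m₁ m₂ (0 : MMap L M (m₁ + 1 + m₂) r) ν h = 0 := by
  subst h
  funext d x
  simp [pc, mcast, pcomp, gcast_zero]

section Structure
variable {R E0 E1 : Type} [AddCommGroup R] [AddCommGroup E0] [AddCommGroup E1]
variable (k : Type) [CommRing k] [Module k R] [Module k E0] [Module k E1]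
variable (pd : E1 →ₗ[k] E0) (Dm : R →ₗ[k] E1)
  (c00 : E0 →ₗ[k] E0 →ₗ[k] E0) (c01 : E0 →ₗ[k] E1 →ₗ[k] E1) (c10 : E1 →ₗ[k] E0 →ₗ[k] E1)
  (S : E0 →ₗ[k] E1 →ₗ[k] R) (Om : E0 →ₗ[k] E0 →ₗ[k] E0 →ₗ[k] E1)

/-- The differential of the complex `E0 ← E1 ← R`. -/
abbrev lamD : MMap (cl R E0 E1) (cl R E0 E1) 1 (-1) := mkD (fun a => pd a) fun f => Dm f

/-- The bracket `λ2`. -/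
abbrev lam2 : MMap (cl R E0 E1) (cl R E0 E1) 2 0 :=
  mkl2 (fun x y => c00 x y) (fun x a => c01 x a) (fun a x => c10 a x) (fun x a => S x a)
    fun f => Dm f

/-- The pairing `λ21`. -/
abbrev lam21 : MMap (cl R E0 E1) (cl R E0 E1) 2 1 := mkl21 fun x a => S x a

/-- The map `λ3`. -/
abbrev lam3 : MMap (cl R E0 E1) (cl R E0 E1) 3 1 := mkl3 fun x y z => Om x y z

open Computes

theorem lamD_comp_lamD (h : ∀ f, pd (Dm f) = 0) :
    fc1 (-2) (lamD k pd Dm) (lamD k pd Dm) = 0 := by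
  have D := computes_mkD k pd Dm
  refine (D.fc1 (-2) (by norm_num) D).ext .zero fun d x _ => ?_
  simp [totD, h]

theorem bd_lam2 (h01 : ∀ x a, pd (c01 x a) = c00 x (pd a))
    (h10 : ∀ a x, pd (c10 a x) = c00 (pd a) x) (h11 : ∀ a b, c01 (pd a) b = c10 a (pd b))
    (h02 : ∀ x f, c01 x (Dm f) = Dm (S x (Dm f))) (h20 : ∀ f x, c10 (Dm f) x = 0)
    (h12 : ∀ a f, S (pd a) (Dm f) = 0) :
    bd (-1) (lamD k pd Dm) (lamD k pd Dm) (lam2 k Dm c00 c01 c10 S) = 0 := by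
  have D := computes_mkD k pd Dm
  have B := computes_mkl2 k Dm c00 c01 c10 S
  refine (D.bd (-1) (by norm_num) B).ext .zero fun d x hx => ?_
  have hx0 := hx 0
  have hx1 := hx 1
  simp only [totD, totl2, Fin.sum_univ_two]
  simp
  generalize x 0 = y0 at *
  generalize x 1 = y1 at *
  rcases hx0 with rfl | ⟨hd0, y, rfl⟩ | ⟨hd0, y, rfl⟩ | ⟨hd0, y, rfl⟩ <;>
  rcases hx1 with rfl | ⟨hd1, z, rfl⟩ | ⟨hd1, z, rfl⟩ | ⟨hd1, z, rfl⟩ <;>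
  simp [*]

theorem bd_lam3
    (h000 : ∀ x y z, pd (Om x y z) = c00 x (c00 y z) - c00 (c00 x y) z - c00 y (c00 x z))
    (h001 : ∀ x y a, Om x y (pd a) = c01 x (c01 y a) - c01 (c00 x y) a - c01 y (c01 x a))
    (h010 : ∀ x a y, Om x (pd a) y = c01 x (c10 a y) - c10 (c01 x a) y - c10 a (c00 x y))
    (h100 : ∀ a x y, Om (pd a) x y = c10 a (c00 x y) - c10 (c10 a x) y - c01 x (c10 a y))
    (h002 : ∀ x y f, S x (Dm (S y (Dm f))) - S (c00 x y) (Dm f) - S y (Dm (S x (Dm f))) = 0) :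
    bd 0 (lamD k pd Dm) (lamD k pd Dm) (lam3 k Om) =
      pc 0 1 0 (lam2 k Dm c00 c01 c10 S) (lam2 k Dm c00 c01 c10 S)
      - pc 0 0 1 (lam2 k Dm c00 c01 c10 S) (lam2 k Dm c00 c01 c10 S)
      - pa (P12 3) (pc 0 1 0 (lam2 k Dm c00 c01 c10 S) (lam2 k Dm c00 c01 c10 S)) := by
  have D := computes_mkD k pd Dm
  have B := computes_mkl2 k Dm c00 c01 c10 S
  have T := computes_mkl3 (R := R) k Om
  refine (D.bd 0 (by norm_num) T).ext
    (((B.pc 0 1 0 (by norm_num) B).sub (B.pc 0 0 1 (by norm_num) B)).sub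
      ((B.pc 0 1 0 (by norm_num) B).pa (P12 3))) fun d x hx => ?_
  simp [totD, totl2, totl3, Fin.sum_univ_succ, outArg, Fin.append, Fin.addCases,
    P12_symm_three]
  by_cases h0 : d 0 = 0
  · by_cases h1 : d 1 = 0
    · simp [koszulSign_P12_three (.inl h0), h0, h1, h000, h001, h010, h100, h002]
      abel
    · have y1 := (hx 1).fst_eq_zero h1
      simp [koszulSign_P12_three (.inl h0), h0, y1, h010]
  · have y0 := (hx 0).fst_eq_zero h0
    by_cases h1 : d 1 = 0
    · simp [koszulSign_P12_three (.inr h1), y0, h100]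
    · have y1 := (hx 1).fst_eq_zero h1
      simp [y0, y1]

theorem lam2_lam3_coherence (h : ∀ w x y z, c10 (Om w x y) z + c01 w (Om x y z)
      - c01 x (Om w y z) + c01 y (Om w x z) - Om (c00 w x) y z + Om w (c00 x y) z
      - Om x (c00 w y) z - Om w x (c00 y z) + Om w y (c00 x z) - Om x y (c00 w z) = 0) :
    (0 : MMap (cl R E0 E1) (cl R E0 E1) 4 1) =
      pc 1 0 1 (lam2 k Dm c00 c01 c10 S) (lam3 k Om)
      + pc 1 1 0 (lam2 k Dm c00 c01 c10 S) (lam3 k Om)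
      - pa (P12 4) (pc 1 1 0 (lam2 k Dm c00 c01 c10 S) (lam3 k Om))
      + pa (P123 4) (pc 1 1 0 (lam2 k Dm c00 c01 c10 S) (lam3 k Om))
      - pc 1 0 2 (lam3 k Om) (lam2 k Dm c00 c01 c10 S)
      + pc 1 1 1 (lam3 k Om) (lam2 k Dm c00 c01 c10 S)
      - pa (P12 4) (pc 1 1 1 (lam3 k Om) (lam2 k Dm c00 c01 c10 S))
      - pc 1 2 0 (lam3 k Om) (lam2 k Dm c00 c01 c10 S)
      + pa (P23 4) (pc 1 2 0 (lam3 k Om) (lam2 k Dm c00 c01 c10 S))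
      - pa (P132 4) (pc 1 2 0 (lam3 k Om) (lam2 k Dm c00 c01 c10 S)) := by
  have B := computes_mkl2 k Dm c00 c01 c10 S
  have T := computes_mkl3 (R := R) k Om
  have BT0 := B.pc 1 0 1 (by norm_num) T
  have BT1 := B.pc 1 1 0 (by norm_num) T
  have TB0 := T.pc 1 0 2 (by norm_num) B
  have TB1 := T.pc 1 1 1 (by norm_num) B
  have TB2 := T.pc 1 2 0 (by norm_num) B
  refine Computes.zero.ext
    (((((((((BT0.add BT1).sub (BT1.pa (P12 4))).add (BT1.pa (P123 4))).sub TB0).add TB1).sub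
      (TB1.pa (P12 4))).sub TB2).add (TB2.pa (P23 4))).sub (TB2.pa (P132 4))) fun d x hx => ?_
  simp [totl2, totl3, Fin.sum_univ_succ, outArg, Fin.append, Fin.addCases, P12_symm_four,
    P23_symm_four, P123_symm_four, P132_symm_four]
  by_cases hd : ∀ j, d j = 0
  · have hs (σ) : koszulSign d σ = 1 := koszulSign_eq_one σ fun i j _ => by rw [hd i, zero_mul]
    simp [hd, hs, h]
    rfl
  · obtain ⟨j, hj⟩ := not_forall.1 hd
    have h0 := (hx j).fst_eq_zero hj
    fin_cases j <;> simp at h0 <;> simp [h0] <;> rfl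

theorem bd_zero {m : ℕ} {r T : ℤ} (h : -1 + r = T) :
    bd T (lamD k pd Dm) (lamD k pd Dm) (0 : MMap (cl R E0 E1) (cl R E0 E1) m r) h = 0 :=
  ((computes_mkD k pd Dm).bd T h .zero).ext .zero fun d x _ => by simp [totD]

theorem pc_lam2_zero_left {n : ℕ} {s T : ℤ} (h : 0 + s = T) :
    pc T 0 1 (lam2 k Dm c00 c01 c10 S) (0 : MMap _ _ n s) h = 0 :=
  ((computes_mkl2 k Dm c00 c01 c10 S).pc T 0 1 h .zero).ext .zero fun d x _ => by
    simp [totl2, outArg, Fin.append, Fin.addCases]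

theorem pc_lam2_zero_right {n : ℕ} {s T : ℤ} (h : 0 + s = T) :
    pc T 1 0 (lam2 k Dm c00 c01 c10 S) (0 : MMap _ _ n s) h = 0 :=
  ((computes_mkl2 k Dm c00 c01 c10 S).pc T 1 0 h .zero).ext .zero fun d x _ => by
    simp [totl2, outArg, Fin.append, Fin.addCases]

theorem lam3_comp_lam3 :
    pc 2 0 2 (lam3 k Om) (lam3 (R := R) k Om) = 0 ∧ pc 2 1 1 (lam3 k Om) (lam3 (R := R) k Om) = 0 ∧
      pc 2 2 0 (lam3 k Om) (lam3 (R := R) k Om) = 0 := by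
  have T := computes_mkl3 (R := R) k Om
  refine ⟨(T.pc 2 0 2 (by norm_num) T).ext .zero ?_, (T.pc 2 1 1 (by norm_num) T).ext .zero ?_,
    (T.pc 2 2 0 (by norm_num) T).ext .zero ?_⟩ <;>
  · intro d x _
    simp [totl3, outArg, Fin.append, Fin.addCases]

theorem lam3_comp_lam21 :
    pc 2 0 2 (lam3 k Om) (lam21 k S) = 0 ∧ pc 2 1 1 (lam3 k Om) (lam21 k S) = 0 ∧
      pc 2 2 0 (lam3 k Om) (lam21 k S) = 0 := by
  have T := computes_mkl3 (R := R) k Om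
  have P := computes_mkl21 k S
  refine ⟨(T.pc 2 0 2 (by norm_num) P).ext .zero ?_, (T.pc 2 1 1 (by norm_num) P).ext .zero ?_,
    (T.pc 2 2 0 (by norm_num) P).ext .zero ?_⟩ <;>
  · intro d x _
    simp [totl21, totl3, outArg, Fin.append, Fin.addCases]

theorem lam21_comp_lam21 :
    pc 2 0 1 (lam21 k S) (lam21 k S) = 0 ∧ pc 2 1 0 (lam21 k S) (lam21 k S) = 0 := by
  have P := computes_mkl21 k S
  refine ⟨(P.pc 2 0 1 (by norm_num) P).ext .zero ?_, (P.pc 2 1 0 (by norm_num) P).ext .zero ?_⟩ <;>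
  · intro d x _
    simp [totl21, outArg, Fin.append, Fin.addCases]

theorem bd_lam21 (h00 : ∀ x y, c00 x y + c00 y x = 0) (h01 : ∀ x a, c01 x a + c10 a x = Dm (S x a))
    (h11 : ∀ a b, S (pd a) b = S (pd b) a) :
    bd 0 (lamD k pd Dm) (lamD k pd Dm) (lam21 k S) =
      lam2 k Dm c00 c01 c10 S + pa (P12 2) (lam2 k Dm c00 c01 c10 S) := by
  have D := computes_mkD k pd Dm
  have B := computes_mkl2 k Dm c00 c01 c10 S
  refine (D.bd 0 (by norm_num) (computes_mkl21 k S)).ext (B.add (B.pa (P12 2))) fun d x hx => ?_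
  simp [totD, totl2, totl21, Fin.sum_univ_succ, P12_symm_two]
  have hx0 := hx 0
  have hx1 := hx 1
  have hs := koszulSign_P12_two (d := d)
  generalize x 0 = y0 at *
  generalize x 1 = y1 at *
  rcases hx0 with rfl | ⟨hd0, y, rfl⟩ | ⟨hd0, y, rfl⟩ | ⟨hd0, y, rfl⟩ <;>
  rcases hx1 with rfl | ⟨hd1, z, rfl⟩ | ⟨hd1, z, rfl⟩ | ⟨hd1, z, rfl⟩ <;>
  simp_all [add_comm]

theorem lam21_symm : lam21 k S - pa (P12 2) (lam21 k S) = 0 := by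
  have P := computes_mkl21 k S
  refine (P.sub (P.pa (P12 2))).ext .zero fun d x hx => ?_
  simp [totl21, P12_symm_two]
  by_cases h0 : d 0 = 0
  · simp [koszulSign_P12_two (.inl h0)]
    abel
  · by_cases h1 : d 1 = 0
    · simp [koszulSign_P12_two (.inr h1), (hx 0).fst_eq_zero h0]
    · simp [(hx 0).fst_eq_zero h0, (hx 1).fst_eq_zero h1]

theorem lam3_skew_left (h : ∀ x y z, Om x y z + Om y x z = 0) :
    lam3 k Om + pa (P12 3) (lam3 k Om) + pc 1 0 1 (lam2 k Dm c00 c01 c10 S) (lam21 k S) = 0 := by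
  have B := computes_mkl2 k Dm c00 c01 c10 S
  have T := computes_mkl3 (R := R) k Om
  have P := computes_mkl21 k S
  refine ((T.add (T.pa (P12 3))).add (B.pc 1 0 1 (by norm_num) P)).ext .zero fun d x hx => ?_
  simp [totl2, totl21, totl3, outArg, Fin.append, Fin.addCases, P12_symm_three]
  by_cases h0 : d 0 = 0
  · simp [koszulSign_P12_three (.inl h0), h]
  · simp [(hx 0).fst_eq_zero h0]

theorem lam3_skew_right (h : ∀ x y z, Om x y z + Om x z y = 0)
    (h001 : ∀ x y a, S x (Dm (S y a)) = S (c00 x y) a + S y (c01 x a))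
    (h100 : ∀ a y z, S z (c10 a y) + S y (c10 a z) = 0) :
    lam3 k Om + pa (P23 3) (lam3 k Om) - pc 1 1 0 (lam2 k Dm c00 c01 c10 S) (lam21 k S)
      + pc 1 0 1 (lam21 k S) (lam2 k Dm c00 c01 c10 S)
      + pa (P12 3) (pc 1 1 0 (lam21 k S) (lam2 k Dm c00 c01 c10 S)) = 0 := by
  have B := computes_mkl2 k Dm c00 c01 c10 S
  have T := computes_mkl3 (R := R) k Om
  have P := computes_mkl21 k S
  refine ((((T.add (T.pa (P23 3))).sub (B.pc 1 1 0 (by norm_num) P)).add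
    (P.pc 1 0 1 (by norm_num) B)).add ((P.pc 1 1 0 (by norm_num) B).pa (P12 3))).ext .zero
    fun d x hx => ?_
  simp [totl2, totl21, totl3, outArg, Fin.append, Fin.addCases, P12_symm_three,
    P23_symm_three]
  constructor
  · by_cases hd : ∀ j, d j = 0
    · rw [koszulSign_eq_one _ fun i j _ => by rw [hd i, zero_mul], one_smul, h]
    · obtain ⟨j, hj⟩ := not_forall.1 hd
      have h0 := (hx j).fst_eq_zero hj
      fin_cases j <;> simp at h0 <;> simp [h0]
  · by_cases h0 : d 0 = 0
    · simp [koszulSign_P12_three (.inl h0), h0, h001]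
      rw [← sub_eq_zero.2 (h100 (x 0).2.1 (x 1).1 (x 2).1)]
      abel
    · by_cases h1 : d 1 = 0
      · simp [koszulSign_P12_three (.inr h1), (hx 0).fst_eq_zero h0, h100]
      · simp [(hx 0).fst_eq_zero h0, (hx 1).fst_eq_zero h1]

theorem lam21_lam3 (h : ∀ w x y z, S z (Om w x y) + S y (Om w x z) = 0) :
    pc 2 0 1 (lam21 k S) (lam3 k Om) + pa (P123 4) (pc 2 1 0 (lam21 k S) (lam3 k Om)) = 0 := by
  have T := computes_mkl3 (R := R) k Om
  have P := computes_mkl21 k S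
  refine ((P.pc 2 0 1 (by norm_num) T).add ((P.pc 2 1 0 (by norm_num) T).pa (P123 4))).ext .zero
    fun d x hx => ?_
  simp [totl21, totl3, outArg, Fin.append, Fin.addCases, P123_symm_four]
  by_cases hd : ∀ j, d j = 0
  · have hs (σ) : koszulSign d σ = 1 := koszulSign_eq_one σ fun i j _ => by rw [hd i, zero_mul]
    simp [hs, hd, h]
  · obtain ⟨j, hj⟩ := not_forall.1 hd
    have h0 := (hx j).fst_eq_zero hj
    fin_cases j <;> simp at h0 <;> simp [h0]

end Structure

/-- **The weak Lie 3-algebra of a CLWX 2-algebroid**: given an (algebraically modeled)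
CLWX 2-algebroid `(R, E0, E1, ∂, ρ, ∘, Ω, S, D)` over a field `k` of characteristic 0,
the 3-term complex `E0 ← E1 ← R` with `λ2` built from `∘` and `λ2(x,f) = S(x,Df)`,
`λ21 = S`, `λ3 = Ω`, and `λ211 = λ31 = λ32 = λ4 = 0` is a weak Lie 3-algebra over `k`. -/
theorem weak_Lie3_of_CLWX
    (k : Type) [Field k] [CharZero k]
    (R : Type) [CommRing R] [Algebra k R]
    (E0 E1 : Type) [AddCommGroup E0] [AddCommGroup E1]
    [Module R E0] [Module R E1] [Module k E0] [Module k E1]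
    [IsScalarTower k R E0] [IsScalarTower k R E1]
    (pd : E1 →ₗ[R] E0)
    (ρ : E0 →ₗ[k] Derivation k R R)
    (S : E0 →ₗ[k] E1 →ₗ[k] R)
    (c00 : E0 →ₗ[k] E0 →ₗ[k] E0) (c01 : E0 →ₗ[k] E1 →ₗ[k] E1) (c10 : E1 →ₗ[k] E0 →ₗ[k] E1)
    (Om : E0 →ₗ[k] E0 →ₗ[k] E0 →ₗ[k] E1)
    (Dm : R →ₗ[k] E1)
    -- `D` is defined by `S(x, Df) = ρ(x)(f)`
    (hD : ∀ (x : E0) (f : R), S x (Dm f) = ρ x f)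
    -- `∘` is skew-symmetric on `E0 × E0`, and `Ω` is a (graded, hence alternating) 3-form
    (hskew : ∀ x y : E0, c00 x y = - c00 y x)
    (hOm12 : ∀ x y z : E0, Om y x z = - Om x y z)
    (hOm23 : ∀ x y z : E0, Om x z y = - Om x y z)
    -- (C1): the 2-term complex `E0 ← E1` with `λ2 = ∘`, `λ3 = Ω` is a Leibniz 2-algebra
    (hC1a : bd (-1) (mkD (R := PUnit) (fun a => pd a) (fun _ => 0))
        (mkD (R := PUnit) (fun a => pd a) (fun _ => 0))
        (mkl2 (R := PUnit) (fun x y => c00 x y) (fun x a => c01 x a) (fun a x => c10 a x)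
          (fun _ _ => 0) (fun _ => 0)) = 0)
    (hC1b : bd 0 (mkD (R := PUnit) (fun a => pd a) (fun _ => 0))
        (mkD (R := PUnit) (fun a => pd a) (fun _ => 0))
        (mkl3 (R := PUnit) (fun x y z => Om x y z)) =
      pc 0 1 0 (mkl2 (R := PUnit) (fun x y => c00 x y) (fun x a => c01 x a)
          (fun a x => c10 a x) (fun _ _ => 0) (fun _ => 0))
        (mkl2 (R := PUnit) (fun x y => c00 x y) (fun x a => c01 x a)
          (fun a x => c10 a x) (fun _ _ => 0) (fun _ => 0))
      - pc 0 0 1 (mkl2 (R := PUnit) (fun x y => c00 x y) (fun x a => c01 x a)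
          (fun a x => c10 a x) (fun _ _ => 0) (fun _ => 0))
        (mkl2 (R := PUnit) (fun x y => c00 x y) (fun x a => c01 x a)
          (fun a x => c10 a x) (fun _ _ => 0) (fun _ => 0))
      - pa (P12 3) (pc 0 1 0 (mkl2 (R := PUnit) (fun x y => c00 x y) (fun x a => c01 x a)
          (fun a x => c10 a x) (fun _ _ => 0) (fun _ => 0))
        (mkl2 (R := PUnit) (fun x y => c00 x y) (fun x a => c01 x a)
          (fun a x => c10 a x) (fun _ _ => 0) (fun _ => 0))))
    (hC1c : (0 : MMap (cl PUnit E0 E1) (cl PUnit E0 E1) 4 1) =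
      pc 1 0 1 (mkl2 (R := PUnit) (fun x y => c00 x y) (fun x a => c01 x a)
          (fun a x => c10 a x) (fun _ _ => 0) (fun _ => 0))
        (mkl3 (R := PUnit) (fun x y z => Om x y z))
      + pc 1 1 0 (mkl2 (R := PUnit) (fun x y => c00 x y) (fun x a => c01 x a)
          (fun a x => c10 a x) (fun _ _ => 0) (fun _ => 0))
        (mkl3 (R := PUnit) (fun x y z => Om x y z))
      - pa (P12 4) (pc 1 1 0 (mkl2 (R := PUnit) (fun x y => c00 x y) (fun x a => c01 x a)
          (fun a x => c10 a x) (fun _ _ => 0) (fun _ => 0))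
        (mkl3 (R := PUnit) (fun x y z => Om x y z)))
      + pa (P123 4) (pc 1 1 0 (mkl2 (R := PUnit) (fun x y => c00 x y) (fun x a => c01 x a)
          (fun a x => c10 a x) (fun _ _ => 0) (fun _ => 0))
        (mkl3 (R := PUnit) (fun x y z => Om x y z)))
      - pc 1 0 2 (mkl3 (R := PUnit) (fun x y z => Om x y z))
        (mkl2 (R := PUnit) (fun x y => c00 x y) (fun x a => c01 x a)
          (fun a x => c10 a x) (fun _ _ => 0) (fun _ => 0))
      + pc 1 1 1 (mkl3 (R := PUnit) (fun x y z => Om x y z))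
        (mkl2 (R := PUnit) (fun x y => c00 x y) (fun x a => c01 x a)
          (fun a x => c10 a x) (fun _ _ => 0) (fun _ => 0))
      - pa (P12 4) (pc 1 1 1 (mkl3 (R := PUnit) (fun x y z => Om x y z))
        (mkl2 (R := PUnit) (fun x y => c00 x y) (fun x a => c01 x a)
          (fun a x => c10 a x) (fun _ _ => 0) (fun _ => 0)))
      - pc 1 2 0 (mkl3 (R := PUnit) (fun x y z => Om x y z))
        (mkl2 (R := PUnit) (fun x y => c00 x y) (fun x a => c01 x a)
          (fun a x => c10 a x) (fun _ _ => 0) (fun _ => 0))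
      + pa (P23 4) (pc 1 2 0 (mkl3 (R := PUnit) (fun x y z => Om x y z))
        (mkl2 (R := PUnit) (fun x y => c00 x y) (fun x a => c01 x a)
          (fun a x => c10 a x) (fun _ _ => 0) (fun _ => 0)))
      - pa (P132 4) (pc 1 2 0 (mkl3 (R := PUnit) (fun x y z => Om x y z))
        (mkl2 (R := PUnit) (fun x y => c00 x y) (fun x a => c01 x a)
          (fun a x => c10 a x) (fun _ _ => 0) (fun _ => 0))))
    -- (C2): `e ∘ e = ½·D S(e,e)`
    (hC2a : ∀ x : E0, c00 x x = 0)
    (hC2b : ∀ (x : E0) (a : E1), c01 x a + c10 a x = (2 : k)⁻¹ • Dm (S x a + S x a))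
    -- (C3)
    (hC3 : ∀ a b : E1, S (pd a) b = S (pd b) a)
    -- (C4), for all homogeneous elements (the nontrivial components)
    (hC4a : ∀ (x y : E0) (b : E1), ρ x (S y b) = S (c00 x y) b + S y (c01 x b))
    (hC4b : ∀ (x z : E0) (a : E1), ρ x (S z a) = S z (c01 x a) + S (c00 x z) a)
    (hC4c : ∀ (a : E1) (y z : E0), S z (c10 a y) + S y (c10 a z) = 0)
    -- (C5)
    (hC5 : ∀ x1 x2 x3 x4 : E0, S x4 (Om x1 x2 x3) = - S x3 (Om x1 x2 x4))
    -- (C6), (C7), (C8)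
    (hC6 : ∀ f : R, pd (Dm f) = 0)
    (hC7 : ∀ (x : E0) (f : R), c01 x (Dm f) = Dm (ρ x f))
    (hC8 : ∀ (f : R) (x : E0), c10 (Dm f) x = 0) :
    ∃ A : WeakLie3 k (cl R E0 E1),
      A.D = mkD (fun a => pd a) (fun f => Dm f) ∧
      A.l2 = mkl2 (fun x y => c00 x y) (fun x a => c01 x a) (fun a x => c10 a x)
        (fun x a => S x a) (fun f => Dm f) ∧
      A.l3 = mkl3 (fun x y z => Om x y z) ∧
      A.l21 = mkl21 (fun x a => S x a) ∧
      A.l211 = 0 ∧ A.l31 = 0 ∧ A.l32 = 0 ∧ A.l4 = 0 := by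
  let pd' : E1 →ₗ[k] E0 := pd.restrictScalars k
  have D0 : Computes k (mkD (R := PUnit) (fun a => pd a) fun _ => 0) _ := computes_mkD k pd' 0
  have B0 : Computes k (mkl2 (R := PUnit) (fun x y => c00 x y) (fun x a => c01 x a)
      (fun a x => c10 a x) (fun _ _ => 0) (fun _ => 0)) _ := computes_mkl2 k 0 c00 c01 c10 0
  have T0 : Computes k (mkl3 (R := PUnit) fun x y z => Om x y z) _ := computes_mkl3 k Om
  have chain := (D0.bd (-1) (by norm_num) B0).congr_of_eq .zero hC1a
  have jacobi := (D0.bd 0 (by norm_num) T0).congr_of_eq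
    (((B0.pc 0 1 0 (by norm_num) B0).sub (B0.pc 0 0 1 (by norm_num) B0)).sub
      ((B0.pc 0 1 0 (by norm_num) B0).pa (P12 3))) hC1b
  have BT0 := B0.pc 1 0 1 (by norm_num) T0
  have BT1 := B0.pc 1 1 0 (by norm_num) T0
  have TB0 := T0.pc 1 0 2 (by norm_num) B0
  have TB1 := T0.pc 1 1 1 (by norm_num) B0
  have TB2 := T0.pc 1 2 0 (by norm_num) B0
  have coherence := Computes.zero.congr_of_eq
    (((((((((BT0.add BT1).sub (BT1.pa (P12 4))).add (BT1.pa (P123 4))).sub TB0).add TB1).sub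
      (TB1.pa (P12 4))).sub TB2).add (TB2.pa (P23 4))).sub (TB2.pa (P132 4))) hC1c
  have chain01 (x a) : pd (c01 x a) = c00 x (pd a) := by
    have := chain ![0, 1] ![(x, 0, 0), (0, a, 0)] (by simp [Fin.forall_fin_succ, IsHomog])
    simpa [totD, totl2, Fin.sum_univ_succ, pd', sub_eq_zero] using this
  have chain10 (a x) : pd (c10 a x) = c00 (pd a) x := by
    have := chain ![1, 0] ![(0, a, 0), (x, 0, 0)] (by simp [Fin.forall_fin_succ, IsHomog])
    simpa [totD, totl2, Fin.sum_univ_succ, pd', sub_eq_zero] using this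
  have chain11 (a b) : c01 (pd a) b = c10 a (pd b) := by
    have := chain ![1, 1] ![(0, a, 0), (0, b, 0)] (by simp [Fin.forall_fin_succ, IsHomog])
    simp [totD, totl2, Fin.sum_univ_succ, pd'] at this
    exact (add_neg_eq_zero.1 this).symm
  have jacobi000 (x y z) :
      pd (Om x y z) = c00 x (c00 y z) - c00 (c00 x y) z - c00 y (c00 x z) := by
    have := jacobi ![0, 0, 0] ![(x, 0, 0), (y, 0, 0), (z, 0, 0)]
      (by simp [Fin.forall_fin_succ, IsHomog])
    simp [totD, totl2, totl3, Fin.sum_univ_succ, pd', Computes.outArg, Fin.append, Fin.addCases,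
      P12_symm_three, koszulSign_P12_three] at this
    exact this.1
  have jacobi001 (x y a) :
      Om x y (pd a) = c01 x (c01 y a) - c01 (c00 x y) a - c01 y (c01 x a) := by
    have := jacobi ![0, 0, 1] ![(x, 0, 0), (y, 0, 0), (0, a, 0)]
      (by simp [Fin.forall_fin_succ, IsHomog])
    simp [totD, totl2, totl3, Fin.sum_univ_succ, pd', Computes.outArg, Fin.append, Fin.addCases,
      P12_symm_three, koszulSign_P12_three] at this
    exact this
  have jacobi010 (x a y) :
      Om x (pd a) y = c01 x (c10 a y) - c10 (c01 x a) y - c10 a (c00 x y) := by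
    have := jacobi ![0, 1, 0] ![(x, 0, 0), (0, a, 0), (y, 0, 0)]
      (by simp [Fin.forall_fin_succ, IsHomog])
    simp [totD, totl2, totl3, Fin.sum_univ_succ, pd', Computes.outArg, Fin.append, Fin.addCases,
      P12_symm_three, koszulSign_P12_three] at this
    exact this
  have jacobi100 (a x y) :
      Om (pd a) x y = c10 a (c00 x y) - c10 (c10 a x) y - c01 x (c10 a y) := by
    have := jacobi ![1, 0, 0] ![(0, a, 0), (x, 0, 0), (y, 0, 0)]
      (by simp [Fin.forall_fin_succ, IsHomog])
    simp [totD, totl2, totl3, Fin.sum_univ_succ, pd', Computes.outArg, Fin.append, Fin.addCases,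
      P12_symm_three, koszulSign_P12_three] at this
    exact this
  have coherence0000 (w x y z) : c10 (Om w x y) z + c01 w (Om x y z)
      - c01 x (Om w y z) + c01 y (Om w x z) - Om (c00 w x) y z + Om w (c00 x y) z
      - Om x (c00 w y) z - Om w x (c00 y z) + Om w y (c00 x z) - Om x y (c00 w z) = 0 := by
    have := coherence ![0, 0, 0, 0] ![(w, 0, 0), (x, 0, 0), (y, 0, 0), (z, 0, 0)]
      (by simp [Fin.forall_fin_succ, IsHomog])
    have hs (σ) : koszulSign ![0, 0, 0, 0] σ = 1 := koszulSign_eq_one σ (by decide)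
    simp [totl2, totl3, Fin.sum_univ_succ, Computes.outArg, Fin.append, Fin.addCases, P12_symm_four,
      P23_symm_four, P123_symm_four, P132_symm_four, hs] at this
    exact (congrArg (·.2.1) this).symm
  have anchor (x y f) : S x (Dm (S y (Dm f))) = S (c00 x y) (Dm f) + S y (Dm (S x (Dm f))) := by
    rw [hD x, hC4a, hC7, hD x]
  refine ⟨{
    D := lamD k pd' Dm
    linD := isMultilinear_mkD k pd' Dm
    dd := lamD_comp_lamD k pd' Dm hC6
    bound := cl_eq_zero
    l2 := lam2 k Dm c00 c01 c10 S
    l3 := lam3 k Om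
    l4 := 0
    l21 := lam21 k S
    l211 := 0
    l31 := 0
    l32 := 0
    leib := {
      lin2 := isMultilinear_mkl2 k Dm c00 c01 c10 S
      lin3 := isMultilinear_mkl3 k Om
      lin4 := isMultilinear_zero k
      eqL1 := ?_
      eqL2 := ?_
      eqL3 := ?_
      eqL4 := ?_ }
    lin21 := isMultilinear_mkl21 k S
    lin211 := isMultilinear_zero k
    lin31 := isMultilinear_zero k
    lin32 := isMultilinear_zero k
    w1 := ?_
    w2 := ?_
    w3 := ?_
    w4 := ?_
    w5 := ?_
    w6 := ?_
    w7 := ?_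
    w8 := ?_
    w9 := ?_
    w10 := ?_
    w11 := ?_ }, rfl, rfl, rfl, rfl, rfl, rfl, rfl, rfl⟩
  · exact bd_lam2 k pd' Dm c00 c01 c10 S chain01 chain10 chain11
      (fun x f => by rw [hC7, hD]) hC8 (fun a f => by
        change S (pd a) (Dm f) = 0
        rw [hC3, hC6, map_zero, LinearMap.zero_apply])
  · exact bd_lam3 k pd' Dm c00 c01 c10 S Om jacobi000 jacobi001 jacobi010 jacobi100
      (fun x y f => by rw [anchor, add_sub_cancel_left, sub_self])
  · rw [bd_zero]
    exact lam2_lam3_coherence k Dm c00 c01 c10 S Om coherence0000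
  · obtain ⟨h1, h2, h3⟩ := lam3_comp_lam3 (R := R) k Om
    rw [h1, h2, h3]
    simp [pa_zero, pc_zero_left, pc_lam2_zero_left, pc_lam2_zero_right]
  · exact bd_lam21 k pd' Dm c00 c01 c10 S (fun x y => by rw [hskew x y, neg_add_cancel])
      (fun x a => by
        rw [hC2b, ← two_smul k, map_smul, inv_smul_smul₀ two_ne_zero]) hC3
  · rw [bd_zero, lam21_symm]
  · rw [bd_zero]
    exact (lam3_skew_left k Dm c00 c01 c10 S Om fun x y z => by rw [hOm12, neg_add_cancel]).symm
  · rw [bd_zero]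
    exact (lam3_skew_right k Dm c00 c01 c10 S Om (fun x y z => by rw [hOm23, neg_add_cancel])
      (fun x y a => by rw [hD, hC4a]) hC4c).symm
  · simp [pa_zero]
  · simp [pa_zero, pc_lam2_zero_left]
  · obtain ⟨h1, h2⟩ := lam21_comp_lam21 k S
    rw [h1, h2]
    simp [pa_zero, pc_zero_left]
  · simp [pa_zero, pc_zero_left, pc_lam2_zero_right]
  · rw [(lam3_comp_lam21 k S Om).1]
    simp [pa_zero, pc_zero_left, pc_lam2_zero_right, pc_lam2_zero_left]
  · rw [(lam3_comp_lam21 k S Om).2.1]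
    simp [pa_zero, pc_zero_left, pc_lam2_zero_right, pc_lam2_zero_left]
  · rw [(lam3_comp_lam21 k S Om).2.2]
    have := lam21_lam3 k S Om fun w x y z => by rw [hC5, neg_add_cancel]
    simp [pa_zero, pc_zero_left, pc_lam2_zero_right, this]

end WL3
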